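/- Let d ≥ 1 be an integer, let r = p^e be a power of a prime p with integer e ≥ 0, and set N = (r−1)(d+2) and k = ⌈((r−1)/r)·d⌉. Then for every continuous map f: Δ_N → ℝ^d there exist r pairwise disjoint faces σ_1, …, σ_r in the k-skeleton of Δ_N such that f(σ_1) ∩ ⋯ ∩ f(σ_r) ≠ ∅. (The topological generalized Van Kampen–Flores theorem; the case m = 0 of the topological generalized transversal Van Kampen–Flores theorem.) -/

import Mathlib

/-!
The proof goes through the topological Tverberg theorem for prime powers, applied to `f` together
with one extra real coordinate.

*Constraint function.* Let `r = p ^ e` and let `esymm (k + 2)` be the elementary symmetric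
polynomial in the barycentric coordinates; on the simplex it vanishes exactly at the points of the
`k`-skeleton (`VKF.esymm_eq_zero_iff`). Tverberg's theorem for `(f, esymm (k + 2))` gives `r` points
with disjoint supports and equal values. Since `r * (k + 2) > N + 1` (`VKF.count_bound`), one of the
supports has at most `k + 1` elements, so the common value of the extra coordinate is `0` and all
supports are that small (`VKF.vkf`).

*Tverberg.* Let `G = (ℤ/p)^e`. The `r`-fold deleted join of the simplex is the join of finitely many
copies of the discrete space `G` (`VKF.conf`). The degree one homogeneous extensions
(`VKF.homog`) of the constant function `1` and of the `D` coordinates of a map give a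
`G`-equivariant map from the deleted join to `D + 1` copies of `ℝ[G]`. A point of the join mapped to
the diagonal, rescaled, is a Tverberg partition (`VKF.tverberg`).

*Hitting the diagonal* (`VKF.exists_diag`). A function on `G` is constant as soon as, for every
linear functional, its sums over the parallel cosets agree (`VKF.radon`); up to scaling there are
`(p ^ e - 1) / (p - 1)` functionals (`VKF.NL`). Label each point of the join, for each functional
and each component, by the position of the largest coset sum. If small simplices exist on which
every label takes all `p` values, then near them all coset sums almost agree, and compactness gives
an exact solution.

*The Sperner-type statement* (`VKF.exists_full`). The cup product of Vandermonde cochains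
`VKF.eps` is a translation invariant mod `p` cocycle that is nonzero only on simplices carrying all
labels (`VKF.eps_ne_zero`). It is evaluated on chain families modelled on the tensor product of the
periodic resolutions of the `e` cyclic factors (`VKF.IsResFam`). The value does not depend on
the family (`VKF.ev_resFam_eq`). For a family obtained by coning it is nonzero
(`VKF.ev_eps_ne_zero`), by an explicit computation that ends in counting tilings of
`ℤ/p ∖ {0}` by pairs `{a, a + 1}` (`VKF.tiling`, `VKF.kap_ne_zero`). On the other hand, connectivity
of the join lets the family live on the deleted join (`VKF.resFam_mem`), hence on its iterated
barycentric subdivisions (`VKF.sd_pow_small`), so some arbitrarily small simplex carries all labels.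
-/


open scoped BigOperators

noncomputable section

/-- The standard `N`-dimensional simplex, realized in Euclidean space `ℝ^{N+1}`. -/
def stdSimp (N : ℕ) : Set (EuclideanSpace ℝ (Fin (N + 1))) :=
  {x | (∀ i, 0 ≤ x i) ∧ ∑ i, x i = 1}

/-- The face of the standard simplex spanned by the vertex set `S`. -/
def simpFace (N : ℕ) (S : Finset (Fin (N + 1))) : Set (EuclideanSpace ℝ (Fin (N + 1))) :=
  {x ∈ stdSimp N | ∀ i, x i ≠ 0 → i ∈ S}

namespace VKF

/-! ### Ordered chains on lists of vertices -/

/-- Ordered chains with coefficients in `K`: formal combinations of finite lists of vertices.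
The list with `n + 1` entries is an ordered `n`-simplex and `[]` is the augmentation simplex, so
all degrees (including `-1`) live in one module. -/
abbrev Ch (K V : Type*) [CommRing K] := List V →₀ K

section Chains

variable {K : Type*} [CommRing K] {V W : Type*}

/-- The cone operator: prepend the vertex `v`. -/
def coneL (v : V) : Ch K V →ₗ[K] Ch K V := Finsupp.lmapDomain K K (List.cons v)

@[simp] lemma coneL_single (v : V) (t : List V) (a : K) :
    coneL v (Finsupp.single t a) = Finsupp.single (v :: t) a := by
  simp [coneL, Finsupp.lmapDomain_apply, Finsupp.mapDomain_single]

/-- The boundary of a single ordered simplex. -/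
def bdList : List V → Ch K V
  | [] => 0
  | v :: t => Finsupp.single t 1 - coneL v (bdList t)

/-- The augmented boundary operator. -/
def bd : Ch K V →ₗ[K] Ch K V := Finsupp.linearCombination K bdList

@[simp] lemma bd_single (t : List V) (a : K) :
    bd (Finsupp.single t a) = a • bdList t := by
  simp [bd]

lemma bd_coneL (v : V) (c : Ch K V) : bd (coneL v c) = c - coneL v (bd c) := by
  induction c using Finsupp.induction_linear with
  | zero => simp
  | add f g hf hg => simp only [map_add, hf, hg]; abel
  | single t a => simp [bdList, smul_sub]

lemma bd_bdList (t : List V) : bd (bdList t : Ch K V) = 0 := by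
  induction t with
  | nil => simp [bdList]
  | cons v t ih => simp [bdList, bd_coneL, ih]

lemma bd_bd (c : Ch K V) : bd (bd c) = 0 := by
  induction c using Finsupp.induction_linear with
  | zero => simp
  | add f g hf hg => simp [hf, hg]
  | single t a => simp [bd_bdList]

/-- The chain map induced by a map of vertices. -/
def mapL (f : V → W) : Ch K V →ₗ[K] Ch K W := Finsupp.lmapDomain K K (List.map f)

@[simp] lemma mapL_single (f : V → W) (t : List V) (a : K) :
    mapL f (Finsupp.single t a) = Finsupp.single (t.map f) a := by
  simp [mapL, Finsupp.lmapDomain_apply, Finsupp.mapDomain_single]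

lemma mapL_coneL (f : V → W) (v : V) (c : Ch K V) :
    mapL f (coneL v c) = coneL (f v) (mapL f c) := by
  induction c using Finsupp.induction_linear with
  | zero => simp
  | add f g hf hg => simp [hf, hg]
  | single t a => simp

lemma mapL_bd (f : V → W) (c : Ch K V) : mapL f (bd c) = bd (mapL f c) := by
  induction c using Finsupp.induction_linear with
  | zero => simp
  | add f g hf hg => simp [hf, hg]
  | single t a =>
    simp only [bd_single, map_smul, mapL_single]
    congr 1
    induction t with
    | nil => simp [bdList]
    | cons v t ih => simp [bdList, mapL_coneL, ih]

lemma mapL_comp {U : Type*} (g : W → U) (f : V → W) (c : Ch K V) :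
    mapL g (mapL f c) = mapL (g ∘ f) c := by
  induction c using Finsupp.induction_linear with
  | zero => simp
  | add f g hf hg => simp [hf, hg]
  | single t a => simp

lemma mapL_id : (mapL (id : V → V) : Ch K V →ₗ[K] Ch K V) = 1 := by
  ext t : 1
  ext
  simp

/-- Evaluation of a cochain on chains. -/
def ev (φ : List V → K) : Ch K V →ₗ[K] K := Finsupp.linearCombination K φ

@[simp] lemma ev_single (φ : List V → K) (t : List V) (a : K) :
    ev φ (Finsupp.single t a) = a * φ t := by
  simp [ev]

lemma ev_coneL (φ : List V → K) (v : V) (c : Ch K V) :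
    ev φ (coneL v c) = ev (fun t => φ (v :: t)) c := by
  induction c using Finsupp.induction_linear with
  | zero => simp
  | add f g hf hg => simp [hf, hg]
  | single t a => simp

lemma ev_mapL (φ : List W → K) (f : V → W) (c : Ch K V) :
    ev φ (mapL f c) = ev (fun t => φ (t.map f)) c := by
  induction c using Finsupp.induction_linear with
  | zero => simp
  | add f g hf hg => simp [hf, hg]
  | single t a => simp

/-- The coboundary of a cochain, computed by recursion along the list. -/
def dl : (List V → K) → List V → K
  | _, [] => 0
  | φ, v :: t => φ t - dl (fun s => φ (v :: s)) t

lemma ev_bdList (t : List V) : ∀ φ : List V → K, ev φ (bdList t) = dl φ t := by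
  induction t with
  | nil => simp [bdList, dl]
  | cons v t ih => intro φ; simp [bdList, dl, ev_coneL, ih]

lemma ev_bd_eq_zero (φ : List V → K) (h : ∀ t, dl φ t = 0) (c : Ch K V) : ev φ (bd c) = 0 := by
  induction c using Finsupp.induction_linear with
  | zero => simp
  | add f g hf hg => simp [hf, hg]
  | single t a => simp [ev_bdList, h]

/-- The cup product of a cochain `α` of degree `q` with a cochain `β`: the front `q`-face is fed
to `α`, the remaining back face (sharing one vertex) to `β`. -/
def cup : ℕ → (List V → K) → (List V → K) → List V → K
  | _, _, _, [] => 0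
  | 0, α, β, v :: t => α [v] * β (v :: t)
  | q + 1, α, β, v :: t => cup q (fun s => α (v :: s)) β t

lemma cup_sub (q : ℕ) (β : List V → K) (t : List V) : ∀ α α' : List V → K,
    cup q (fun s => α s - α' s) β t = cup q α β t - cup q α' β t := by
  induction t generalizing q with
  | nil => intro α α'; simp [cup]
  | cons v t ih =>
    intro α α'
    cases q with
    | zero => simp [cup, sub_mul]
    | succ q => simp only [cup]; exact ih q _ _

lemma cup_zero_right (q : ℕ) (t : List V) : ∀ α : List V → K,
    cup q α (fun _ => 0) t = 0 := by
  induction t generalizing q with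
  | nil => intro α; simp [cup]
  | cons v t ih =>
    intro α
    cases q with
    | zero => simp [cup]
    | succ q => simp only [cup]; exact ih q _

lemma dl_const_mul (a : K) (t : List V) : ∀ φ : List V → K,
    dl (fun s => a * φ s) t = a * dl φ t := by
  induction t with
  | nil => simp [dl]
  | cons v t ih => intro φ; simp [dl, ih, mul_sub]

/-- The Leibniz rule for the cup product. -/
lemma dl_cup (β : List V → K) (hβ : β [] = 0) (t : List V) : ∀ (q : ℕ) (α : List V → K),
    dl (cup q α β) t = cup (q + 1) (dl α) β t + (-1) ^ q * cup q α (dl β) t := by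
  induction t with
  | nil => intro q α; simp [dl, cup]
  | cons v t ih =>
    intro q α
    cases q with
    | zero =>
      have h1 : (fun s => cup 0 α β (v :: s)) = fun s => α [v] * β (v :: s) := by
        funext s; simp [cup]
      rw [dl, h1, dl_const_mul]
      cases t with
      | nil => simp [cup, dl, hβ]
      | cons u t' =>
        simp only [cup, dl]
        ring
    | succ q =>
      have h1 : (fun s => cup (q + 1) α β (v :: s)) = cup q (fun s => α (v :: s)) β := by
        funext s; simp [cup]
      have h2 : (fun s => dl α (v :: s)) =
          fun s => α s - dl (fun s' => α (v :: s')) s := by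
        funext s; simp [dl]
      rw [dl, h1, ih]
      simp only [cup]
      rw [h2, cup_sub]
      ring

lemma cup_congr_left (q : ℕ) (β : List V → K) (t : List V) : ∀ α α' : List V → K,
    (∀ s, s.length = q + 1 → α s = α' s) → cup q α β t = cup q α' β t := by
  induction t generalizing q with
  | nil => intro α α' _; simp [cup]
  | cons v t ih =>
    intro α α' h
    cases q with
    | zero => simp [cup, h [v] rfl]
    | succ q =>
      simp only [cup]
      exact ih q _ _ fun s hs => h (v :: s) (by simp [hs])

lemma cup_zero_left (q : ℕ) (β : List V → K) (t : List V) : ∀ α : List V → K,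
    (∀ s, s.length = q + 1 → α s = 0) → cup q α β t = 0 := by
  induction t generalizing q with
  | nil => intro α _; simp [cup]
  | cons v t ih =>
    intro α h
    cases q with
    | zero => simp [cup, h [v] rfl]
    | succ q =>
      simp only [cup]
      exact ih q _ fun s hs => h (v :: s) (by simp [hs])

lemma cup_map (f : V → W) (β : List W → K) (q : ℕ) (t : List V) : ∀ α : List W → K,
    cup q α β (t.map f) = cup q (fun s => α (s.map f)) (fun s => β (s.map f)) t := by
  induction t generalizing q with
  | nil => intro α; simp [cup]
  | cons v t ih =>
    intro α
    cases q with
    | zero => simp [cup]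
    | succ q => simp only [List.map_cons, cup]; exact ih q _

/-- A nonvanishing cup product has a nonvanishing front face and a nonvanishing back face. -/
lemma cup_ne_zero (β : List V → K) (t : List V) : ∀ (q : ℕ) (α : List V → K),
    cup q α β t ≠ 0 → (∃ s, s.length = q + 1 ∧ (∀ x ∈ s, x ∈ t) ∧ α s ≠ 0) ∧
      ∃ s, (∀ x ∈ s, x ∈ t) ∧ β s ≠ 0 := by
  induction t with
  | nil => intro q α h; simp [cup] at h
  | cons v t ih =>
    intro q α h
    cases q with
    | zero =>
      simp only [cup] at h
      exact ⟨⟨[v], rfl, by simp, left_ne_zero_of_mul h⟩, ⟨v :: t, by simp, right_ne_zero_of_mul h⟩⟩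
    | succ q =>
      simp only [cup] at h
      obtain ⟨⟨s, hs, hm, ha⟩, s', hm', hb⟩ := ih q _ h
      refine ⟨⟨v :: s, by simp [hs], ?_, ha⟩, s', fun x hx => List.mem_cons_of_mem _ (hm' x hx), hb⟩
      intro x hx
      rcases List.mem_cons.1 hx with rfl | hx
      · simp
      · exact List.mem_cons_of_mem _ (hm x hx)

end Chains

/-! ### Families indexed by multidegrees -/

section Multi

variable {K : Type*} [CommRing K] {C D : Type*} [AddCommGroup C] [Module K C]
  [AddCommGroup D] [Module K D] {e : ℕ}

/-- Lower the `k`-th entry of a multidegree by one. -/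
def dec (n : Fin e → ℕ) (k : Fin e) : Fin e → ℕ := Function.update n k (n k - 1)

/-- The Koszul sign for moving a letter of index `k` to the front. -/
def sgnK (K : Type*) [CommRing K] (n : Fin e → ℕ) (k : Fin e) : K :=
  (-1) ^ (∑ j ∈ Finset.Iio k, n j)

/-- The differential of a tensor product of `e` one-generator-per-degree complexes, applied to a
family `a` of values on the generators: `X k m` is the coefficient of the differential from degree
`m` to degree `m - 1` in the `k`-th factor. -/
def dd (X : Fin e → ℕ → C →ₗ[K] C) (a : (Fin e → ℕ) → C) (n : Fin e → ℕ) : C :=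
  ∑ k, if n k = 0 then 0 else sgnK K n k • X k (n k) (a (dec n k))

lemma dec_self (n : Fin e → ℕ) (k : Fin e) : dec n k k = n k - 1 := by simp [dec]

lemma dec_ne (n : Fin e → ℕ) {k l : Fin e} (h : l ≠ k) : dec n k l = n l := by
  simp [dec, h]

lemma dec_comm (n : Fin e → ℕ) {k l : Fin e} (h : k ≠ l) : dec (dec n k) l = dec (dec n l) k := by
  simp only [dec, Function.update_of_ne h, Function.update_of_ne h.symm]
  rw [Function.update_comm h]

lemma sum_dec (n : Fin e → ℕ) (k : Fin e) (h : n k ≠ 0) : ∑ j, dec n k j + 1 = ∑ j, n j := by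
  rw [← Finset.add_sum_erase _ _ (Finset.mem_univ k),
    ← Finset.add_sum_erase _ n (Finset.mem_univ k), dec_self]
  rw [Finset.sum_congr rfl fun j hj => dec_ne n (Finset.ne_of_mem_erase hj)]
  omega

lemma sgnK_dec_of_le (n : Fin e → ℕ) {k l : Fin e} (h : l ≤ k) :
    sgnK K (dec n k) l = sgnK K n l := by
  unfold sgnK
  congr 1
  exact Finset.sum_congr rfl fun j hj =>
    dec_ne n (ne_of_lt (lt_of_lt_of_le (Finset.mem_Iio.1 hj) h))

lemma sgnK_dec_of_lt (n : Fin e → ℕ) {k l : Fin e} (h : k < l) (hk : n k ≠ 0) :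
    sgnK K (dec n k) l = - sgnK K n l := by
  have hm : k ∈ Finset.Iio l := Finset.mem_Iio.2 h
  have : ∑ j ∈ Finset.Iio l, n j = ∑ j ∈ Finset.Iio l, dec n k j + 1 := by
    rw [← Finset.add_sum_erase _ n hm, ← Finset.add_sum_erase _ (dec n k) hm, dec_self]
    rw [Finset.sum_congr rfl fun j hj => dec_ne n (Finset.ne_of_mem_erase hj)]
    omega
  unfold sgnK
  rw [this, pow_succ]
  simp

/-- The signs `sgnK` make the total differential square to zero, provided the partial differentials
commute and square to zero. -/
lemma dd_dd (X : Fin e → ℕ → C →ₗ[K] C)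
    (hcomm : ∀ k l, k ≠ l → ∀ m m' c, X k m (X l m' c) = X l m' (X k m c))
    (hsq : ∀ k m c, X k (m + 1) (X k m c) = 0) (a : (Fin e → ℕ) → C) (n : Fin e → ℕ) :
    dd X (dd X a) n = 0 := by
  have h1 : dd X (dd X a) n = ∑ q : Fin e × Fin e,
      if n q.1 = 0 then 0 else if dec n q.1 q.2 = 0 then 0 else
        (sgnK K n q.1 * sgnK K (dec n q.1) q.2) •
          X q.1 (n q.1) (X q.2 (dec n q.1 q.2) (a (dec (dec n q.1) q.2))) := by
    rw [Fintype.sum_prod_type]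
    unfold dd
    refine Finset.sum_congr rfl fun k _ => ?_
    split_ifs with hk
    · simp
    · rw [map_sum, Finset.smul_sum]
      refine Finset.sum_congr rfl fun l _ => ?_
      split_ifs with hl
      · simp
      · simp only [map_smul, mul_smul]
  have hdiag : ∀ k, X k (n k) (X k (dec n k k) (a (dec (dec n k) k))) = 0 ∨ n k = 0 := by
    intro k
    by_cases hk : n k = 0
    · exact Or.inr hk
    · left
      rw [dec_self]
      obtain ⟨m, hm⟩ := Nat.exists_eq_succ_of_ne_zero hk
      rw [hm]
      exact hsq k m _
  rw [h1]
  refine Finset.sum_involution (fun q _ => (q.2, q.1)) ?_ ?_ (fun _ _ => Finset.mem_univ _)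
    (fun _ _ => rfl)
  · rintro ⟨k, l⟩ -
    by_cases hkl : k = l
    · subst hkl
      rcases hdiag k with h | h <;> simp [h]
    · simp only
      rw [dec_ne n (Ne.symm hkl), dec_ne n hkl]
      by_cases hk : n k = 0
      · simp [hk]
      by_cases hl : n l = 0
      · simp [hl]
      simp only [hk, hl, if_false]
      rw [dec_comm n hkl, hcomm k l hkl, ← add_smul]
      rcases lt_or_gt_of_ne hkl with h | h
      · rw [sgnK_dec_of_lt n h hk, sgnK_dec_of_le n h.le]
        convert zero_smul K _ using 2
        ring
      · rw [sgnK_dec_of_lt n h hl, sgnK_dec_of_le n (le_of_lt h)]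
        convert zero_smul K _ using 2
        ring
  · rintro ⟨k, l⟩ - hne heq
    simp only [Prod.mk.injEq] at heq
    obtain ⟨rfl, -⟩ := heq
    rcases hdiag l with h | h <;> simp [h] at hne

lemma dd_congr (X : Fin e → ℕ → C →ₗ[K] C) (a b : (Fin e → ℕ) → C) (n : Fin e → ℕ)
    (h : ∀ m : Fin e → ℕ, ∑ j, m j < ∑ j, n j → a m = b m) : dd X a n = dd X b n := by
  unfold dd
  refine Finset.sum_congr rfl fun k _ => ?_
  split_ifs with hk
  · rfl
  · rw [h]
    have := sum_dec n k hk
    omega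

lemma dd_sub (X : Fin e → ℕ → C →ₗ[K] C) (a b : (Fin e → ℕ) → C) (n : Fin e → ℕ) :
    dd X (fun m => a m - b m) n = dd X a n - dd X b n := by
  unfold dd
  rw [← Finset.sum_sub_distrib]
  refine Finset.sum_congr rfl fun k _ => ?_
  split_ifs with hk
  · simp
  · simp [smul_sub]

/-- Linear maps intertwining the coefficients commute with the differential of families. -/
lemma map_dd (X : Fin e → ℕ → C →ₗ[K] C) (Y : Fin e → ℕ → D →ₗ[K] D) (Φ : C →ₗ[K] D)
    (h : ∀ k m c, Φ (X k m c) = Y k m (Φ c)) (a : (Fin e → ℕ) → C) (n : Fin e → ℕ) :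
    Φ (dd X a n) = dd Y (fun m => Φ (a m)) n := by
  unfold dd
  rw [map_sum]
  refine Finset.sum_congr rfl fun k _ => ?_
  split_ifs with hk
  · simp
  · simp [h]

lemma dd_eq_zero (X : Fin e → ℕ → C →ₗ[K] C) (a : (Fin e → ℕ) → C) (n : Fin e → ℕ)
    (h : ∀ k, n k ≠ 0 → X k (n k) (a (dec n k)) = 0) : dd X a n = 0 := by
  unfold dd
  refine Finset.sum_eq_zero fun k _ => ?_
  split_ifs with hk
  · rfl
  · rw [h k hk, smul_zero]

/-- Recursion along the total degree: families prescribed through the values of `dd`. -/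
lemma exists_family (X : Fin e → ℕ → C →ₗ[K] C) (R : (Fin e → ℕ) → C → C) :
    ∃ c : (Fin e → ℕ) → C, ∀ n, c n = R n (dd X c n) := by
  let F : ℕ → (Fin e → ℕ) → C := fun j => Nat.rec (fun _ => 0) (fun _ c n => R n (dd X c n)) j
  have hF : ∀ j n, F (j + 1) n = R n (dd X (F j) n) := fun _ _ => rfl
  have stab : ∀ s : ℕ, ∀ n : Fin e → ℕ, ∑ j, n j = s → ∀ j, s < j → F j n = F (s + 1) n := by
    intro s
    induction s using Nat.strong_induction_on with
    | _ s ih =>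
      intro n hn j hj
      obtain ⟨j, rfl⟩ : ∃ i, j = i + 1 := ⟨j - 1, by omega⟩
      rw [hF, hF]
      congr 1
      refine dd_congr X _ _ n fun m hm => ?_
      rw [ih _ (by omega) m rfl j (by omega), ih _ (by omega) m rfl s (by omega)]
  refine ⟨fun n => F (∑ j, n j + 1) n, fun n => ?_⟩
  change F (∑ j, n j + 1) n = _
  rw [hF]
  congr 1
  refine dd_congr X _ _ n fun m hm => ?_
  exact stab _ m rfl _ hm

end Multi

/-! ### The operators of the minimal resolution -/

section Ops

variable (p : ℕ) [Fact p.Prime] {V W : Type*} {e : ℕ}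

/-- The coefficients of the periodic resolution of the cyclic group of order `q` generated by `A`:
`A - 1` in odd degrees and the norm element in even degrees. -/
def coef {R : Type*} [Ring R] (q m : ℕ) (A : R) : R :=
  if Odd m then A - 1 else ∑ i ∈ Finset.range q, A ^ i

lemma coef_sq {R : Type*} [Ring R] (q m : ℕ) (A : R) (h1 : A ^ q = 1) :
    coef q (m + 1) A * coef q m A = 0 := by
  unfold coef
  rcases Nat.even_or_odd m with h | h
  · rw [if_pos h.add_one, if_neg (by simpa using h), mul_geom_sum, h1, sub_self]
  · rw [if_neg (by simpa using h.add_one), if_pos h, geom_sum_mul, h1, sub_self]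

lemma commute_coef {R : Type*} [Ring R] (q m m' : ℕ) {A B : R} (h0 : Commute A B) :
    Commute (coef q m A) (coef q m' B) := by
  have hA : Commute (A - 1) B := h0.sub_left (Commute.one_left _)
  have hB : Commute A (B - 1) := h0.sub_right (Commute.one_right _)
  unfold coef
  split_ifs
  · exact hA.sub_right (Commute.one_right _)
  · exact Commute.sum_right _ _ _ fun i _ => hA.pow_right i
  · exact Commute.sum_left _ _ _ fun i _ => hB.pow_left i
  · exact Commute.sum_left _ _ _ fun i _ => Commute.sum_right _ _ _ fun j _ =>
      h0.pow_pow i j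

lemma coef_apply_of_odd {C : Type*} [AddCommGroup C] [Module (ZMod p) C] (q m : ℕ)
    (A : Module.End (ZMod p) C) (h : Odd m) (c : C) : coef q m A c = A c - c := by
  unfold coef
  rw [if_pos h]
  rfl

lemma coef_apply_of_even {C : Type*} [AddCommGroup C] [Module (ZMod p) C] (q m : ℕ)
    (A : Module.End (ZMod p) C) (h : ¬ Odd m) (c : C) :
    coef q m A c = ∑ i ∈ Finset.range q, (A ^ i) c := by
  unfold coef
  rw [if_neg h]
  exact LinearMap.sum_apply _ _ _

/-- The resolution coefficients of the generators `T k`, acting on chains. -/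
def Xop (T : Fin e → V → V) (k : Fin e) (m : ℕ) : Module.End (ZMod p) (Ch (ZMod p) V) :=
  coef p m (mapL (T k) : Module.End (ZMod p) (Ch (ZMod p) V))

lemma mapL_pow (f : V → V) (i : ℕ) :
    (mapL f : Module.End (ZMod p) (Ch (ZMod p) V)) ^ i = mapL (f^[i]) := by
  induction i with
  | zero => rw [pow_zero, Function.iterate_zero, mapL_id]
  | succ i ih =>
    rw [pow_succ, ih, Function.iterate_succ]
    apply LinearMap.ext
    intro x
    rw [Module.End.mul_apply, mapL_comp]

lemma Xop_odd (T : Fin e → V → V) (k : Fin e) (m : ℕ) (h : Odd m) (c : Ch (ZMod p) V) :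
    Xop p T k m c = mapL (T k) c - c :=
  coef_apply_of_odd p p m _ h c

lemma Xop_even (T : Fin e → V → V) (k : Fin e) (m : ℕ) (h : ¬ Odd m) (c : Ch (ZMod p) V) :
    Xop p T k m c = ∑ i ∈ Finset.range p, mapL ((T k)^[i]) c := by
  rw [Xop, coef_apply_of_even p p m _ h c]
  refine Finset.sum_congr rfl fun i _ => ?_
  rw [mapL_pow]

lemma Xop_sq (T : Fin e → V → V) (hT : ∀ k, (T k)^[p] = id) (k : Fin e) (m : ℕ)
    (c : Ch (ZMod p) V) : Xop p T k (m + 1) (Xop p T k m c) = 0 := by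
  have h1 : (mapL (T k) : Module.End (ZMod p) (Ch (ZMod p) V)) ^ p = 1 := by
    rw [mapL_pow, hT, mapL_id]
  have h2 := coef_sq (R := Module.End (ZMod p) (Ch (ZMod p) V)) p m (mapL (T k)) h1
  exact LinearMap.congr_fun h2 c

lemma Xop_comm (T : Fin e → V → V) (hT : ∀ k l v, T k (T l v) = T l (T k v)) (k l : Fin e)
    (m m' : ℕ) (c : Ch (ZMod p) V) : Xop p T k m (Xop p T l m' c) = Xop p T l m' (Xop p T k m c) := by
  have h0 : Commute (mapL (T k) : Module.End (ZMod p) (Ch (ZMod p) V)) (mapL (T l)) := by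
    apply LinearMap.ext
    intro x
    rw [Module.End.mul_apply, Module.End.mul_apply, mapL_comp, mapL_comp]
    congr 2
    funext v
    exact hT k l v
  have h2 := (commute_coef (R := Module.End (ZMod p) (Ch (ZMod p) V)) p m m' h0).eq
  exact LinearMap.congr_fun h2 c

/-- A linear map commuting with the generators commutes with the resolution coefficients. -/
lemma map_Xop (T : Fin e → V → V) (T' : Fin e → W → W)
    (Φ : Ch (ZMod p) V →ₗ[ZMod p] Ch (ZMod p) W)
    (h : ∀ k c, Φ (mapL (T k) c) = mapL (T' k) (Φ c)) (k : Fin e) (m : ℕ) (c : Ch (ZMod p) V) :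
    Φ (Xop p T k m c) = Xop p T' k m (Φ c) := by
  have hp : ∀ i : ℕ, ∀ c, Φ (mapL ((T k)^[i]) c) = mapL ((T' k)^[i]) (Φ c) := by
    intro i
    induction i with
    | zero => intro c; simp only [Function.iterate_zero, mapL_id]; rfl
    | succ i ih =>
      intro c
      rw [Function.iterate_succ, Function.iterate_succ, ← mapL_comp, ← mapL_comp, ih, h]
  by_cases hm : Odd m
  · rw [Xop_odd p T k m hm, Xop_odd p T' k m hm, map_sub, h]
  · rw [Xop_even p T k m hm, Xop_even p T' k m hm, map_sum]
    exact Finset.sum_congr rfl fun i _ => hp i c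

/-- A functional invariant under `T k` kills the image of every coefficient. -/
lemma functional_Xop (T : Fin e → V → V) (k : Fin e) (φ : Ch (ZMod p) V →ₗ[ZMod p] ZMod p)
    (h : ∀ c, φ (mapL (T k) c) = φ c) (m : ℕ) (c : Ch (ZMod p) V) : φ (Xop p T k m c) = 0 := by
  have hp : ∀ i : ℕ, φ (mapL ((T k)^[i]) c) = φ c := by
    intro i
    induction i with
    | zero => simp only [Function.iterate_zero, mapL_id]; rfl
    | succ i ih => rw [Function.iterate_succ', ← mapL_comp, h, ih]
  by_cases hm : Odd m
  · rw [Xop_odd p T k m hm, map_sub, h, sub_self]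
  · rw [Xop_even p T k m hm, map_sum, Finset.sum_congr rfl fun i _ => hp i]
    simp

lemma Xop_nil (T : Fin e → V → V) (k : Fin e) (m : ℕ) :
    Xop p T k m (Finsupp.single [] 1) = 0 := by
  by_cases hm : Odd m
  · rw [Xop_odd p T k m hm]; simp
  · rw [Xop_even p T k m hm]
    simp [← Nat.cast_smul_eq_nsmul (ZMod p)]

/-- The augmentation term of a family: the empty simplex in multidegree zero. -/
def augF (V : Type*) (n : Fin e → ℕ) : Ch (ZMod p) V :=
  if n = 0 then Finsupp.single [] 1 else 0

lemma dd_augF (T : Fin e → V → V) (n : Fin e → ℕ) : dd (Xop p T) (augF p V) n = 0 := by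
  refine dd_eq_zero _ _ _ fun k _ => ?_
  unfold augF
  split_ifs
  · exact Xop_nil p T k _
  · simp

lemma bd_augF (n : Fin e → ℕ) : bd (augF p V n) = 0 := by
  unfold augF
  split_ifs
  · simp [bdList]
  · simp

/-- A family of chains that is the image of the generators of the product resolution under an
augmentation-preserving chain map. -/
def IsResFam (T : Fin e → V → V) (a : (Fin e → ℕ) → Ch (ZMod p) V) : Prop :=
  ∀ n, bd (a n) = dd (Xop p T) a n + augF p V n

lemma bd_dd (T : Fin e → V → V) (a : (Fin e → ℕ) → Ch (ZMod p) V) (n : Fin e → ℕ) :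
    bd (dd (Xop p T) a n) = dd (Xop p T) (fun m => bd (a m)) n :=
  map_dd _ _ bd (fun k m c => map_Xop p T T bd (fun k c => (mapL_bd (T k) c).symm) k m c) a n

lemma dd_add (T : Fin e → V → V) (a b : (Fin e → ℕ) → Ch (ZMod p) V) (n : Fin e → ℕ) :
    dd (Xop p T) (fun m => a m + b m) n = dd (Xop p T) a n + dd (Xop p T) b n := by
  have := dd_sub (Xop p T) (fun m => a m + b m) b n
  simp only [add_sub_cancel_right] at this
  rw [this]; abel

/-- Coning off successively produces a resolution family. -/
lemma isResFam_of_cone (T : Fin e → V → V) (hT : ∀ k, (T k)^[p] = id)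
    (hc : ∀ k l v, T k (T l v) = T l (T k v)) (v : (Fin e → ℕ) → V)
    (a : (Fin e → ℕ) → Ch (ZMod p) V)
    (ha : ∀ n, a n = coneL (v n) (dd (Xop p T) a n + augF p V n)) : IsResFam p T a := by
  have key : ∀ s : ℕ, ∀ n : Fin e → ℕ, ∑ j, n j = s →
      bd (a n) = dd (Xop p T) a n + augF p V n := by
    intro s
    induction s using Nat.strong_induction_on with
    | _ s ih =>
      intro n hn
      conv_lhs => rw [ha n]
      rw [bd_coneL, map_add, bd_augF, bd_dd,
        dd_congr (Xop p T) _ (fun m => dd (Xop p T) a m + augF p V m) n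
          (fun m hm => ih _ (by omega) m rfl), dd_add, dd_augF,
        dd_dd _ (fun k l _ => Xop_comm p T hc k l) (Xop_sq p T hT)]
      simp
  exact fun n => key _ n rfl

/-- Invariant cocycles take the same values on all resolution families. -/
lemma ev_resFam_eq (T : Fin e → V → V) (hT : ∀ k, (T k)^[p] = id)
    (hc : ∀ k l v, T k (T l v) = T l (T k v)) (v : V)
    (a b : (Fin e → ℕ) → Ch (ZMod p) V) (ha : IsResFam p T a) (hb : IsResFam p T b)
    (φ : List V → ZMod p) (hφ : ∀ t, dl φ t = 0) (hinv : ∀ k t, φ (t.map (T k)) = φ t)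
    (n : Fin e → ℕ) : ev φ (a n) = ev φ (b n) := by
  obtain ⟨h, hh⟩ := exists_family (Xop p T) (fun n z => coneL v (a n - b n - z))
  have key : ∀ s : ℕ, ∀ n : Fin e → ℕ, ∑ j, n j = s →
      bd (h n) = a n - b n - dd (Xop p T) h n := by
    intro s
    induction s using Nat.strong_induction_on with
    | _ s ih =>
      intro n hn
      conv_lhs => rw [hh n]
      rw [bd_coneL, map_sub, map_sub bd (a n) (b n), bd_dd,
        dd_congr (Xop p T) _ (fun m => a m - b m - dd (Xop p T) h m) n
          (fun m hm => ih _ (by omega) m rfl), dd_sub (Xop p T) (fun m => a m - b m), dd_sub,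
        dd_dd _ (fun k l _ => Xop_comm p T hc k l) (Xop_sq p T hT), ha n, hb n]
      simp
  have h1 := key _ n rfl
  have h2 : ev φ (dd (Xop p T) h n) = 0 := by
    unfold dd
    rw [map_sum]
    refine Finset.sum_eq_zero fun k _ => ?_
    split_ifs
    · simp
    · rw [map_smul, functional_Xop p T k (ev φ) _ _ _, smul_zero]
      intro c
      rw [ev_mapL]
      congr 2
      funext t
      exact hinv k t
  have h3 := congrArg (ev φ) h1
  rw [ev_bd_eq_zero φ hφ, map_sub, map_sub, h2] at h3
  linear_combination -h3

/-- An equivariant augmented chain map transports resolution families. -/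
lemma IsResFam.map (T : Fin e → V → V) (T' : Fin e → W → W)
    (Φ : Ch (ZMod p) V →ₗ[ZMod p] Ch (ZMod p) W)
    (h : ∀ k c, Φ (mapL (T k) c) = mapL (T' k) (Φ c)) (hbd : ∀ c, Φ (bd c) = bd (Φ c))
    (hnil : Φ (Finsupp.single [] 1) = Finsupp.single [] 1)
    {a : (Fin e → ℕ) → Ch (ZMod p) V} (ha : IsResFam p T a) :
    IsResFam p T' (fun n => Φ (a n)) := by
  intro n
  rw [← hbd, ha n, map_add, map_dd _ (Xop p T') Φ (map_Xop p T T' Φ h)]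
  congr 1
  unfold augF
  split_ifs
  · exact hnil
  · simp

end Ops

/-! ### The Vandermonde cocycle -/

section Vand

variable {K : Type*} [CommRing K]

/-- The Vandermonde product `∏_{i<j} (t_j - t_i)` of a list. -/
def vand : List K → K
  | [] => 1
  | a :: t => (t.map (fun b => b - a)).prod * vand t

lemma vand_ofFn (n : ℕ) : ∀ v : Fin n → K,
    vand (List.ofFn v) = (Matrix.vandermonde v).det := by
  induction n with
  | zero => intro v; simp [vand]
  | succ n ih =>
    intro v
    rw [List.ofFn_succ, vand, ih, Matrix.det_vandermonde, Matrix.det_vandermonde,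
      Fin.prod_univ_succ, Fin.prod_Ioi_zero, List.map_ofFn, List.prod_ofFn]
    congr 1
    refine Finset.prod_congr rfl fun i _ => ?_
    rw [Fin.prod_Ioi_succ]

lemma dl_ofFn {V : Type*} (n : ℕ) : ∀ (φ : List V → K) (v : Fin (n + 1) → V),
    dl φ (List.ofFn v) = ∑ i : Fin (n + 1), (-1) ^ (i : ℕ) * φ (List.ofFn (v ∘ i.succAbove)) := by
  induction n with
  | zero => intro φ v; simp [dl]
  | succ n ih =>
    intro φ v
    rw [Fin.sum_univ_succ, List.ofFn_succ, dl, ih, sub_eq_add_neg, ← Finset.sum_neg_distrib]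
    congr 1
    · simp [Function.comp_def]
    · refine Finset.sum_congr rfl fun i _ => ?_
      have : (List.ofFn (v ∘ (Fin.succ i).succAbove)) =
          v 0 :: List.ofFn ((fun j : Fin (n + 1) => v j.succ) ∘ i.succAbove) := by
        rw [List.ofFn_succ]
        simp [Function.comp_def]
      rw [this]
      simp [pow_succ]

/-- The Vandermonde product is a cocycle: the alternating sum is the Laplace expansion of a
determinant with two equal columns. -/
lemma dl_vand (t : List K) (ht : 2 ≤ t.length) : dl vand t = 0 := by
  obtain ⟨n, hn⟩ : ∃ n, t.length = n + 1 + 1 := ⟨t.length - 2, by omega⟩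
  obtain ⟨v, rfl⟩ : ∃ v : Fin (n + 1 + 1) → K, t = List.ofFn v := by
    refine ⟨fun i => t.get (i.cast hn.symm), ?_⟩
    apply List.ext_get
    · simp [hn]
    · intro i h1 h2; simp only [List.get_ofFn]; rfl
  rw [dl_ofFn]
  let A : Matrix (Fin (n + 1 + 1)) (Fin (n + 1 + 1)) K := fun i j => v i ^ ((j : ℕ) - 1)
  have hA : A.det = 0 := Matrix.det_zero_of_column_eq (i := 0) (j := 1) (by simp) (by simp [A])
  rw [Matrix.det_succ_column_zero] at hA
  rw [← hA]
  refine Finset.sum_congr rfl fun i _ => ?_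
  rw [vand_ofFn]
  have : A.submatrix i.succAbove Fin.succ = Matrix.vandermonde (v ∘ i.succAbove) := by
    ext a b
    rw [Matrix.submatrix_apply, Matrix.vandermonde_apply]
    simp [A]
  rw [this]
  simp [A]

lemma vand_add (c : K) (t : List K) : vand (t.map (fun x => x + c)) = vand t := by
  induction t with
  | nil => simp [vand]
  | cons a t ih => simp [vand, ih, Function.comp_def]

lemma vand_append (u t : List K) :
    vand (u ++ t) = vand u * (u.map fun a => (t.map fun b => b - a).prod).prod * vand t := by
  induction u with
  | nil => simp [vand]
  | cons a u ih => simp [vand, ih]; ring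

lemma vand_ne_zero_iff [IsDomain K] (t : List K) : vand t ≠ 0 ↔ t.Nodup := by
  induction t with
  | nil => simp [vand]
  | cons a t ih =>
    rw [vand, mul_ne_zero_iff, ih, List.nodup_cons]
    simp [List.prod_eq_zero_iff, sub_eq_zero]

/-- Consecutive pairs may be permuted inside a Vandermonde product. -/
lemma vand_flatMap_perm {l l' : List K} (h : l.Perm l') :
    vand (l.flatMap fun a => [a, a + 1]) = vand (l'.flatMap fun a => [a, a + 1]) := by
  induction h with
  | nil => rfl
  | @cons x l l' h ih =>
    have h1 : ∀ c : K, ((l.flatMap fun a => [a, a + 1]).map fun b => b - c).prod =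
        ((l'.flatMap fun a => [a, a + 1]).map fun b => b - c).prod :=
      fun c => ((h.flatMap_right _).map _).prod_eq
    simp only [List.flatMap_cons, List.cons_append, List.nil_append, vand, List.map_cons,
      List.prod_cons, ih, h1]
  | swap x y l =>
    simp only [List.flatMap_cons, List.cons_append, List.nil_append, vand, List.map_cons,
      List.prod_cons]
    ring
  | trans _ _ ih1 ih2 => exact ih1.trans ih2

lemma vand_cons_flatMap_perm (c : K) {l l' : List K} (h : l.Perm l') :
    vand (c :: l.flatMap fun a => [a, a + 1]) = vand (c :: l'.flatMap fun a => [a, a + 1]) := by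
  rw [vand, vand, vand_flatMap_perm h, ((h.flatMap_right _).map _).prod_eq]

end Vand

section Kappa

variable (p : ℕ) [Fact p.Prime]

lemma mem_of_nodup (t : List (ZMod p)) (h : t.Nodup) (hl : p ≤ t.length) (c : ZMod p) : c ∈ t := by
  have h1 : t.toFinset = Finset.univ := by
    apply Finset.eq_univ_of_card
    rw [ZMod.card]
    apply le_antisymm
    · exact (Finset.card_le_univ _).trans (ZMod.card p).le
    · rwa [List.toFinset_card_of_nodup h]
  have : c ∈ t.toFinset := by rw [h1]; exact Finset.mem_univ c
  simpa using this

lemma range_eq_pairs (m : ℕ) :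
    List.range (2 * m + 1) = 0 :: (List.range m).flatMap (fun j => [2 * j + 1, 2 * j + 2]) := by
  induction m with
  | zero => simp
  | succ m ih =>
    rw [show 2 * (m + 1) + 1 = 2 * m + 1 + 1 + 1 by ring, List.range_succ, List.range_succ, ih,
      List.range_succ]
    simp

lemma cast_inj_of_lt {a b : ℕ} (ha : a < p) (hb : b < p) (h : (a : ZMod p) = b) : a = b := by
  have := congrArg ZMod.val h
  rwa [ZMod.val_cast_of_lt ha, ZMod.val_cast_of_lt hb] at this

/-- The Vandermonde product of `0, 1, …, p - 1` is nonzero. -/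
lemma vand_base_ne_zero (m : ℕ) (hm : p = 2 * m + 1) :
    vand ((0 : ZMod p) :: (List.ofFn fun j : Fin m => 2 * ((j : ℕ) : ZMod p) + 1).flatMap
      fun a => [a, a + 1]) ≠ 0 := by
  rw [vand_ne_zero_iff]
  have h1 : (0 : ZMod p) :: (List.ofFn fun j : Fin m => 2 * ((j : ℕ) : ZMod p) + 1).flatMap
      (fun a => [a, a + 1]) = (List.range (2 * m + 1)).map (fun n : ℕ => (n : ZMod p)) := by
    rw [range_eq_pairs, List.ofFn_eq_map, List.flatMap_map, List.map_cons, List.map_flatMap,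
      ← List.map_coe_finRange_eq_range, List.flatMap_map]
    simp only [Nat.cast_zero, List.cons.injEq, true_and]
    congr 1
    funext j
    simp [add_assoc]
    norm_num
  rw [h1]
  refine List.Nodup.map_on ?_ List.nodup_range
  intro x hx y hy hxy
  rw [List.mem_range] at hx hy
  exact cast_inj_of_lt p (by omega) (by omega) hxy

/-- The only tiling of `ℤ/p ∖ {0}` by pairs `{a, a + 1}` is `{1,2}, {3,4}, …`. -/
lemma tiling (m : ℕ) (hm : p = 2 * m + 1) (a : Fin m → ZMod p)
    (h : ((0 : ZMod p) :: (List.ofFn a).flatMap fun a => [a, a + 1]).Nodup) :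
    ∃ σ : Equiv.Perm (Fin m), a = fun j => 2 * ((σ j : ℕ) : ZMod p) + 1 := by
  have hlen : p ≤ ((0 : ZMod p) :: (List.ofFn a).flatMap fun a => [a, a + 1]).length := by
    simp [List.length_flatMap, Function.comp_def, List.ofFn_const]
    omega
  have hcov : ∀ c : ZMod p, c ≠ 0 → ∃ j, c = a j ∨ c = a j + 1 := by
    intro c hc
    have := mem_of_nodup p _ h hlen c
    simpa [hc, List.mem_flatMap, List.mem_ofFn] using this
  rw [List.nodup_cons, List.nodup_flatMap] at h
  obtain ⟨h0, -, hpw⟩ := h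
  rw [List.pairwise_ofFn] at hpw
  have ha0 : ∀ j, a j ≠ 0 := by
    intro j hj
    apply h0
    simp only [List.mem_flatMap, List.mem_ofFn]
    exact ⟨a j, ⟨j, rfl⟩, by simp [hj]⟩
  have hne : ∀ j j', a j ≠ a j' + 1 := by
    intro j j' hj
    rcases lt_trichotomy j j' with hlt | heq | hlt
    · have := hpw hlt
      simp [Function.onFun, hj] at this
    · subst heq
      simp at hj
    · have := hpw hlt
      simp [Function.onFun, hj] at this
  have hex : ∀ i : ℕ, i < m → ∃ j, a j = 2 * (i : ZMod p) + 1 := by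
    intro i
    induction i with
    | zero =>
      intro _
      obtain ⟨j, hj | hj⟩ := hcov 1 one_ne_zero
      · exact ⟨j, by simp [← hj]⟩
      · exact absurd (by simpa using hj) (ha0 j)
    | succ i ih =>
      intro hi
      obtain ⟨j, hj⟩ := ih (by omega)
      have hnz : (2 * ((i + 1 : ℕ) : ZMod p) + 1) ≠ 0 := by
        intro hz
        have : ((2 * (i + 1) + 1 : ℕ) : ZMod p) = ((0 : ℕ) : ZMod p) := by
          push_cast at hz ⊢; exact hz
        have := cast_inj_of_lt p (by omega) (by omega) this
        omega
      obtain ⟨j', hj' | hj'⟩ := hcov _ hnz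
      · exact ⟨j', hj'.symm⟩
      · refine absurd ?_ (hne j' j)
        rw [hj]
        push_cast at hj'
        linear_combination -hj'
  choose g hg using fun i : Fin m => hex i i.2
  have hinj : Function.Injective g := by
    intro i i' hii
    have h1 := hg i
    rw [hii, hg i'] at h1
    have h2 : ((2 * (i' : ℕ) + 1 : ℕ) : ZMod p) = ((2 * (i : ℕ) + 1 : ℕ) : ZMod p) := by
      push_cast; exact h1
    have := cast_inj_of_lt p (by omega) (by omega) h2
    exact Fin.ext (by omega)
  let σ := Equiv.ofBijective g (Finite.injective_iff_bijective.1 hinj)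
  refine ⟨σ.symm, ?_⟩
  funext j
  rw [← hg]
  congr 1
  exact (σ.apply_symm_apply j).symm

/-- The iterated sum produced by evaluating one Vandermonde block on the resolution family. -/
def kap : ℕ → List (ZMod p) → ZMod p → ZMod p
  | 0, u, c => vand (u ++ [c])
  | m + 1, u, c => ∑ a : ZMod p, kap m (u ++ [c, a]) (a + 1)

lemma kap_eq (m : ℕ) : ∀ u c, kap p m u c =
    ∑ a : Fin m → ZMod p, vand (u ++ c :: (List.ofFn a).flatMap fun a => [a, a + 1]) := by
  induction m with
  | zero => intro u c; simp [kap]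
  | succ m ih =>
    intro u c
    rw [kap, ← (Fin.consEquiv fun _ : Fin (m + 1) => ZMod p).sum_comp, Fintype.sum_prod_type]
    refine Finset.sum_congr rfl fun a _ => ?_
    rw [ih]
    refine Finset.sum_congr rfl fun b _ => ?_
    simp [Fin.consEquiv, List.ofFn_succ]

/-- Only the `m!` reorderings of the unique tiling contribute to the sum; they contribute equally,
and `m < p`. -/
lemma kap_ne_zero (m : ℕ) (hm : p = 2 * m + 1) : kap p m [] 0 ≠ 0 := by
  rw [kap_eq]
  simp only [List.nil_append]
  have h1 : ∑ σ : Equiv.Perm (Fin m), vand ((0 : ZMod p) ::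
      (List.ofFn fun j : Fin m => 2 * ((j : ℕ) : ZMod p) + 1).flatMap fun a => [a, a + 1]) =
      ∑ a : Fin m → ZMod p, vand ((0 : ZMod p) :: (List.ofFn a).flatMap fun a => [a, a + 1]) := by
    refine Finset.sum_of_injOn (fun σ j => 2 * ((σ j : ℕ) : ZMod p) + 1) ?_ (by simp) ?_ ?_
    · intro σ _ σ' _ h
      ext j
      have h2 : ((2 * (σ j : ℕ) + 1 : ℕ) : ZMod p) = ((2 * (σ' j : ℕ) + 1 : ℕ) : ZMod p) := by
        push_cast; exact congrFun h j
      have := cast_inj_of_lt p (by omega) (by omega) h2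
      omega
    · intro a _ ha
      by_contra hne
      obtain ⟨σ, hσ⟩ := tiling p m hm a ((vand_ne_zero_iff _).1 hne)
      exact ha ⟨σ, by simp, hσ.symm⟩
    · intro σ _
      apply vand_cons_flatMap_perm
      exact (Equiv.Perm.ofFn_comp_perm σ (fun j : Fin m => 2 * ((j : ℕ) : ZMod p) + 1)).symm
  rw [← h1, Finset.sum_const, Finset.card_univ, Fintype.card_perm, Fintype.card_fin,
    nsmul_eq_mul]
  refine mul_ne_zero ?_ (vand_base_ne_zero p m hm)
  rw [Ne, ZMod.natCast_eq_zero_iff, (Fact.out : p.Prime).dvd_factorial]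
  omega

end Kappa

/-! ### The Euler cocycle and its value on the resolution family -/

section Eps

variable {K : Type*} [CommRing K] {V W : Type*}

lemma dl_eq_zero_of (t : List V) : ∀ φ : List V → K,
    (∀ s, s.length + 1 = t.length → φ s = 0) → dl φ t = 0 := by
  induction t with
  | nil => intro φ _; simp [dl]
  | cons v t ih =>
    intro φ h
    rw [dl, h t (by simp), ih _ fun s hs => h (v :: s) (by simp [hs]), sub_zero]

lemma dl_map (f : V → W) (t : List V) : ∀ φ : List W → K,
    dl (fun s => φ (s.map f)) t = dl φ (t.map f) := by
  induction t with
  | nil => intro φ; simp [dl]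
  | cons v t ih =>
    intro φ
    rw [List.map_cons, dl, dl, ← ih]
    simp

variable (p : ℕ) [Fact p.Prime] {ι : Type*}

/-- The cup product, over the entries `s` of a list of coordinates, of the Vandermonde cocycles of
degree `p - 1` in the `s`-th coordinate of the labels. It represents a mod `p` Euler class. -/
def eps : List ι → List (ι → ZMod p) → ZMod p
  | [], t => if t.length = 1 then 1 else 0
  | s :: S, t => cup (p - 1) (fun t => vand (t.map fun τ => τ s)) (eps S) t

lemma eps_nil (S : List ι) : eps p S [] = 0 := by
  cases S <;> simp [eps, cup]

/-- The Euler cocycle is closed, by the Leibniz rule and closedness of the Vandermonde cochain. -/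
lemma dl_eps (S : List ι) : ∀ t, dl (eps p S) t = 0 := by
  induction S with
  | nil =>
    intro t
    match t with
    | [] => simp [dl]
    | [a] => simp [dl, eps]
    | [a, b] => simp [dl, eps]
    | a :: b :: c :: t =>
      apply dl_eq_zero_of
      intro s hs
      have : s.length ≠ 1 := by simp at hs; omega
      simp [eps, this]
  | cons s S ih =>
    intro t
    have h1 : eps p (s :: S) = cup (p - 1) (fun t => vand (t.map fun τ => τ s)) (eps p S) := by
      funext t; simp [eps]
    have h2 : dl (eps p S) = fun _ => 0 := funext ih
    rw [h1, dl_cup _ (eps_nil p S), h2, cup_zero_right, cup_zero_left]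
    · simp
    · intro t ht
      rw [dl_map, dl_vand]
      have := (Fact.out : p.Prime).two_le
      simp only [List.length_map]
      omega

lemma eps_shift (S : List ι) (u : ι → ZMod p) :
    ∀ t, eps p S (t.map fun τ => τ + u) = eps p S t := by
  induction S with
  | nil => intro t; simp [eps]
  | cons s S ih =>
    intro t
    rw [eps, eps, cup_map]
    have h1 : (fun t : List (ι → ZMod p) => eps p S (t.map fun τ => τ + u)) = eps p S := funext ih
    rw [h1]
    refine cup_congr_left _ _ _ _ _ fun t _ => ?_
    have := vand_add (u s) (t.map fun τ => τ s)
    rw [← this]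
    simp [Function.comp_def]

/-- Where the Euler cocycle does not vanish, every coordinate takes every value. -/
lemma eps_ne_zero (S : List ι) : ∀ t, eps p S t ≠ 0 → ∀ s ∈ S, ∀ c, ∃ τ ∈ t, τ s = c := by
  induction S with
  | nil => simp
  | cons s S ih =>
    intro t ht
    rw [eps] at ht
    obtain ⟨⟨w, hw, hm, hv⟩, w', hm', hv'⟩ := cup_ne_zero _ _ _ _ ht
    intro s' hs' c
    rcases List.mem_cons.1 hs' with rfl | hs'
    · have h1 := mem_of_nodup p _ ((vand_ne_zero_iff _).1 hv)
        (by have := (Fact.out : p.Prime).two_le; simp; omega) c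
      obtain ⟨τ, hτ, hc⟩ := List.mem_map.1 h1
      exact ⟨τ, hm τ hτ, hc⟩
    · obtain ⟨τ, hτ, hc⟩ := ih w' hv' s' hs' c
      exact ⟨τ, hm' τ hτ, hc⟩

end Eps

section Eval

variable (p : ℕ) [Fact p.Prime] {ι : Type*} {e : ℕ}

/-- Translation of labels by the generator `k`, where `ℓ s k` is the effect on coordinate `s`. -/
def trL (ℓ : ι → Fin e → ZMod p) (k : Fin e) (τ : ι → ZMod p) : ι → ZMod p :=
  fun s => τ s + ℓ s k

/-- Translation of labels by a multiple of the generator `k`. -/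
def trM (ℓ : ι → Fin e → ZMod p) (k : Fin e) (c : ZMod p) (τ : ι → ZMod p) : ι → ZMod p :=
  τ + fun s => c * ℓ s k

lemma trL_iterate (ℓ : ι → Fin e → ZMod p) (k : Fin e) (i : ℕ) :
    (trL p ℓ k)^[i] = trM p ℓ k (i : ZMod p) := by
  induction i with
  | zero => funext τ s; simp [trM]
  | succ i ih =>
    rw [Function.iterate_succ', ih]
    funext τ s
    simp [trL, trM]
    ring

lemma trL_pow (ℓ : ι → Fin e → ZMod p) (k : Fin e) : (trL p ℓ k)^[p] = id := by
  rw [trL_iterate]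
  funext τ s
  simp [trM]

lemma trL_comm (ℓ : ι → Fin e → ZMod p) (k l : Fin e) (τ : ι → ZMod p) :
    trL p ℓ k (trL p ℓ l τ) = trL p ℓ l (trL p ℓ k τ) := by
  funext s
  simp [trL]
  ring

lemma trM_trM (ℓ : ι → Fin e → ZMod p) (k : Fin e) (c c' : ZMod p) (z : Ch (ZMod p) (ι → ZMod p)) :
    mapL (trM p ℓ k c) (mapL (trM p ℓ k c') z) = mapL (trM p ℓ k (c + c')) z := by
  rw [mapL_comp]
  congr 2
  funext τ s
  simp [trM]
  ring

/-- The cochain obtained from a Vandermonde cup product once the labels `u` have been read. -/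
def gfun (s : ι) (β : List (ι → ZMod p) → ZMod p) (q : ℕ) (u : List (ZMod p)) :
    List (ι → ZMod p) → ZMod p :=
  cup q (fun t => vand (u ++ t.map fun τ => τ s)) β

lemma ev_gfun_succ_cone (s : ι) (β : List (ι → ZMod p) → ZMod p) (q : ℕ) (u : List (ZMod p))
    (w : ι → ZMod p) (z : Ch (ZMod p) (ι → ZMod p)) :
    ev (gfun p s β (q + 1) u) (coneL w z) = ev (gfun p s β q (u ++ [w s])) z := by
  rw [ev_coneL]
  congr 2
  funext t
  simp [gfun, cup]

lemma ev_gfun_zero_cone (s : ι) (β : List (ι → ZMod p) → ZMod p) (u : List (ZMod p))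
    (w : ι → ZMod p) (z : Ch (ZMod p) (ι → ZMod p)) :
    ev (gfun p s β 0 u) (coneL w z) = vand (u ++ [w s]) * ev β (coneL w z) := by
  rw [ev_coneL, ev_coneL]
  induction z using Finsupp.induction_linear with
  | zero => simp
  | add f g hf hg => rw [map_add, map_add, hf, hg, mul_add]
  | single t a => simp [gfun, cup]; ring

lemma gfun_eq_zero (s : ι) (β : List (ι → ZMod p) → ZMod p) (q : ℕ) (u : List (ZMod p))
    (hu : ¬ u.Nodup) : gfun p s β q u = fun _ => 0 := by
  funext t
  refine cup_zero_left _ _ _ _ fun w _ => ?_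
  by_contra h
  exact hu (((vand_ne_zero_iff _).1 h).sublist (List.sublist_append_left _ _))

lemma ev_zero (z : Ch (ZMod p) (ι → ZMod p)) : ev (fun _ => (0 : ZMod p)) z = 0 := by
  induction z using Finsupp.induction_linear with
  | zero => simp
  | add f g hf hg => rw [map_add, hf, hg, add_zero]
  | single t a => simp

lemma sum_range_cast (F : ZMod p → ZMod p) :
    ∑ i ∈ Finset.range p, F (i : ZMod p) = ∑ i : ZMod p, F i := by
  refine Finset.sum_bij (fun i _ => (i : ZMod p)) (by simp) ?_ ?_ (by simp)
  · intro a ha b hb h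
    exact cast_inj_of_lt p (Finset.mem_range.1 ha) (Finset.mem_range.1 hb) h
  · intro b _
    exact ⟨b.val, Finset.mem_range.2 (ZMod.val_lt b), by simp⟩

variable (ℓ : ι → Fin e → ZMod p) (a : (Fin e → ℕ) → Ch (ZMod p) (ι → ZMod p))

/-- The value of `gfun` on a translate of the resolution family `a`. -/
def Hval (s : ι) (k : Fin e) (β : List (ι → ZMod p) → ZMod p) (q : ℕ) (u : List (ZMod p))
    (c : ZMod p) (n : Fin e → ℕ) : ZMod p :=
  ev (gfun p s β q u) (mapL (trM p ℓ k c) (a n))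

variable (ha : ∀ n, a n = coneL 0 (dd (Xop p (trL p ℓ)) a n + augF p _ n))
  (s : ι) (k : Fin e) (β : List (ι → ZMod p) → ZMod p)
  (hβ : ∀ (u : ι → ZMod p) t, β (t.map fun τ => τ + u) = β t)
  (hk1 : ℓ s k = 1) (hk0 : ∀ j, j < k → ℓ s j = 0)

include ha hk1 in
/-- A repeated label kills the Vandermonde product. -/
lemma Hval_mem (q : ℕ) (u : List (ZMod p)) (c : ZMod p) (n : Fin e → ℕ) (hc : c ∈ u) :
    Hval p ℓ a s k β q u c n = 0 := by
  have hw : trM p ℓ k c 0 s = c := by simp [trM, hk1]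
  have hnd : ¬ (u ++ [c]).Nodup := by
    intro h
    rw [List.nodup_append] at h
    exact h.2.2 c hc c (by simp) rfl
  rw [Hval, ha n, mapL_coneL]
  cases q with
  | zero =>
    rw [ev_gfun_zero_cone, hw, not_not.1 (mt (vand_ne_zero_iff _).1 hnd), zero_mul]
  | succ q =>
    rw [ev_gfun_succ_cone, hw, gfun_eq_zero p s β q _ hnd, ev_zero]

include ha hk1 hβ in
lemma Hval_zero (u : List (ZMod p)) (c : ZMod p) (n : Fin e → ℕ) :
    Hval p ℓ a s k β 0 u c n = vand (u ++ [c]) * ev β (a n) := by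
  have hw : trM p ℓ k c 0 s = c := by simp [trM, hk1]
  have h1 : ev β (mapL (trM p ℓ k c) (a n)) = ev β (a n) := by
    rw [ev_mapL]
    congr 2
    funext t
    exact hβ _ t
  rw [← h1, Hval, ha n, mapL_coneL, ev_gfun_zero_cone, hw]

include ha hk1 hk0 hβ in
/-- Reading one more label: only the letter `k` of the differential survives. -/
lemma Hval_succ (q : ℕ) (u : List (ZMod p)) (c : ZMod p) (n : Fin e → ℕ) (hn : n k ≠ 0)
    (hn0 : ∀ j, k < j → n j = 0) :
    Hval p ℓ a s k β (q + 1) u c n = sgnK (ZMod p) n k *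
      ev (gfun p s β q (u ++ [c]))
        (mapL (trM p ℓ k c) (Xop p (trL p ℓ) k (n k) (a (dec n k)))) := by
  have hw : trM p ℓ k c 0 s = c := by simp [trM, hk1]
  have haug : augF p (ι → ZMod p) n = 0 := by
    unfold augF
    rw [if_neg]
    intro h
    exact hn (by rw [h]; rfl)
  rw [Hval, ha n, mapL_coneL, ev_gfun_succ_cone, hw, haug, add_zero]
  unfold dd
  rw [map_sum, map_sum, Finset.sum_eq_single k]
  · rw [if_neg hn, map_smul, map_smul, smul_eq_mul]
  · intro j _ hj
    split_ifs with h0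
    · simp
    · have hjk : j < k := by
        rcases lt_or_gt_of_ne hj with h | h
        · exact h
        · exact absurd (hn0 j h) h0
      rw [map_smul, map_smul]
      have := functional_Xop p (trL p ℓ) j
        ((ev (gfun p s β q (u ++ [c]))).comp (mapL (trM p ℓ k c))) ?_ (n j) (a (dec n j))
      · rw [LinearMap.comp_apply] at this
        rw [this, smul_zero]
      · intro z
        rw [LinearMap.comp_apply, LinearMap.comp_apply, mapL_comp,
          show trM p ℓ k c ∘ trL p ℓ j = trL p ℓ j ∘ trM p ℓ k c by
            funext τ s; simp [trM, trL]; ring, ← mapL_comp, ev_mapL]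
        congr 2
        funext t
        unfold gfun
        rw [cup_map]
        have h1 : (fun t : List (ι → ZMod p) => β (t.map (trL p ℓ j))) = β := by
          funext t
          exact hβ (fun s => ℓ s j) t
        rw [h1]
        refine cup_congr_left _ _ _ _ _ fun t _ => ?_
        simp [Function.comp_def, trL, hk0 j hjk]
  · simp

include ha hk1 hk0 hβ in
/-- In odd degree the partial differential is `T - 1`, and the identity term repeats a label. -/
lemma Hval_succ_odd (q : ℕ) (u : List (ZMod p)) (c : ZMod p) (n : Fin e → ℕ) (hn : Odd (n k))
    (hn0 : ∀ j, k < j → n j = 0) :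
    Hval p ℓ a s k β (q + 1) u c n =
      sgnK (ZMod p) n k * Hval p ℓ a s k β q (u ++ [c]) (c + 1) (dec n k) := by
  have h1 : mapL (trL p ℓ k) = mapL (K := ZMod p) (trM p ℓ k 1) := by
    have := trL_iterate p ℓ k 1
    rw [Function.iterate_one, Nat.cast_one] at this
    rw [this]
  have h2 := Hval_mem p ℓ a ha s k β hk1 q (u ++ [c]) c (dec n k) (by simp)
  rw [Hval_succ p ℓ a ha s k β hβ hk1 hk0 q u c n (by rintro h; simp [h] at hn) hn0,
    Xop_odd p _ k _ hn, map_sub, map_sub, h1, trM_trM]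
  unfold Hval at h2 ⊢
  rw [h2, sub_zero]

include ha hk1 hk0 hβ in
/-- In positive even degree the partial differential is the norm, so all labels are summed over. -/
lemma Hval_succ_even (q : ℕ) (u : List (ZMod p)) (c : ZMod p) (n : Fin e → ℕ) (hn' : n k ≠ 0)
    (hn : ¬ Odd (n k)) (hn0 : ∀ j, k < j → n j = 0) :
    Hval p ℓ a s k β (q + 1) u c n =
      sgnK (ZMod p) n k * ∑ b : ZMod p, Hval p ℓ a s k β q (u ++ [c]) b (dec n k) := by
  rw [Hval_succ p ℓ a ha s k β hβ hk1 hk0 q u c n hn' hn0,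
    Xop_even p _ k _ hn, map_sum, map_sum,
    ← Equiv.sum_comp (Equiv.addLeft c) (fun b => Hval p ℓ a s k β q (u ++ [c]) b (dec n k)),
    ← sum_range_cast]
  congr 1
  refine Finset.sum_congr rfl fun i _ => ?_
  rw [trL_iterate, trM_trM]
  rfl

include ha hk1 hk0 hβ in
/-- Reading two labels at a time produces the sums `kap`; the sign depends on the degrees only. -/
lemma Hval_pairs (m : ℕ) : ∀ n n₀ : Fin e → ℕ, Even (n₀ k) → n = n₀ + Pi.single k (2 * m) →
    (∀ j, k < j → n j = 0) →
    ∃ ε : ZMod p, ε ≠ 0 ∧ ∀ u c,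
      Hval p ℓ a s k β (2 * m) u c n = ε * (kap p m u c * ev β (a n₀)) := by
  induction m with
  | zero =>
    intro n n₀ _ hn _
    refine ⟨1, one_ne_zero, fun u c => ?_⟩
    have : n = n₀ := by rw [hn]; simp
    rw [mul_zero, Hval_zero p ℓ a ha s k β hβ hk1, this]
    simp [kap]
  | succ m ih =>
    intro n n₀ he hn hn0
    have hnk : n k = n₀ k + 2 * (m + 1) := by rw [hn]; simp
    have hd1 : dec n k k = n₀ k + 2 * m + 1 := by rw [dec_self, hnk]; omega
    have hd2 : dec (dec n k) k = n₀ + Pi.single k (2 * m) := by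
      funext j
      by_cases hj : j = k
      · subst hj; rw [dec_self, hd1]; simp
      · rw [dec_ne _ hj, dec_ne _ hj, hn]; simp [hj]
    have hz1 : ∀ j, k < j → dec n k j = 0 := fun j hj => by rw [dec_ne _ hj.ne']; exact hn0 j hj
    have hz2 : ∀ j, k < j → dec (dec n k) k j = 0 := fun j hj => by
      rw [dec_ne _ hj.ne']; exact hz1 j hj
    obtain ⟨ε, hε, hH⟩ := ih _ n₀ he hd2 hz2
    have hsg : ∀ n : Fin e → ℕ, sgnK (ZMod p) n k ≠ 0 := fun n => by
      unfold sgnK; exact pow_ne_zero _ (by simp)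
    refine ⟨sgnK (ZMod p) n k * sgnK (ZMod p) (dec n k) k * ε,
      mul_ne_zero (mul_ne_zero (hsg _) (hsg _)) hε, fun u c => ?_⟩
    have hodd : Odd (dec n k k) := by
      rw [hd1]
      exact (he.add (even_two_mul m)).add_one
    have heven : ¬ Odd (n k) := by
      rw [hnk, Nat.not_odd_iff_even]
      exact he.add (even_two_mul _)
    rw [show 2 * (m + 1) = 2 * m + 1 + 1 by ring,
      Hval_succ_even p ℓ a ha s k β hβ hk1 hk0 _ u c n (by omega) heven hn0]
    have : ∀ b : ZMod p, Hval p ℓ a s k β (2 * m + 1) (u ++ [c]) b (dec n k) =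
        sgnK (ZMod p) (dec n k) k * (ε * (kap p m (u ++ [c, b]) (b + 1) * ev β (a n₀))) := by
      intro b
      rw [Hval_succ_odd p ℓ a ha s k β hβ hk1 hk0 _ _ b (dec n k) hodd hz1, hH]
      simp
    rw [Finset.sum_congr rfl fun b _ => this b]
    rw [kap, ← Finset.mul_sum, ← Finset.mul_sum, ← Finset.sum_mul]
    ring

include ha hk1 hk0 hβ in
/-- Reading a whole block of `p` labels in direction `k` strips one Vandermonde factor off the
cocycle without losing nonvanishing. For `p = 2` a block is a single
step, of odd or even degree. -/
lemma Hval_block (n n₀ : Fin e → ℕ) (hn : n = n₀ + Pi.single k (p - 1))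
    (hdvd : p - 1 ∣ n₀ k) (hn0 : ∀ j, k < j → n j = 0) (hne : ev β (a n₀) ≠ 0) :
    Hval p ℓ a s k β (p - 1) [] 0 n ≠ 0 := by
  rcases (Fact.out : p.Prime).eq_two_or_odd' with h2 | hodd
  · have hsg : ∀ n : Fin e → ℕ, sgnK (ZMod p) n k ≠ 0 := fun n => by
      unfold sgnK; exact pow_ne_zero _ (by simp)
    have hp1 : p - 1 = 0 + 1 := by omega
    have hnk : n k = n₀ k + 1 := by rw [hn, hp1]; simp
    have hd : dec n k = n₀ := by
      funext j
      by_cases hj : j = k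
      · subst hj; rw [dec_self, hnk]; simp
      · rw [dec_ne _ hj, hn]; simp [hj]
    have hv : ∀ b : ZMod p, Hval p ℓ a s k β 0 ([] ++ [0]) b (dec n k) = b * ev β (a n₀) := by
      intro b
      rw [Hval_zero p ℓ a ha s k β hβ hk1, hd]
      simp [vand]
    rw [hp1]
    by_cases ho : Odd (n k)
    · rw [Hval_succ_odd p ℓ a ha s k β hβ hk1 hk0 _ _ _ n ho hn0, hv, zero_add, one_mul]
      exact mul_ne_zero (hsg _) hne
    · rw [Hval_succ_even p ℓ a ha s k β hβ hk1 hk0 _ _ _ n (by omega) ho hn0]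
      refine mul_ne_zero (hsg _) ?_
      rw [Finset.sum_congr rfl fun b _ => hv b, ← sum_range_cast p (fun b => b * ev β (a n₀)),
        show Finset.range p = {0, 1} by rw [h2]; rfl]
      simpa using hne
  · obtain ⟨m, hm⟩ := hodd
    have hp1 : p - 1 = 2 * m := by omega
    obtain ⟨ε, hε, hH⟩ := Hval_pairs p ℓ a ha s k β hβ hk1 hk0 m n n₀
      (by rw [hp1] at hdvd; exact even_iff_two_dvd.2 ((dvd_mul_right 2 m).trans hdvd))
      (by rw [← hp1]; exact hn) hn0
    rw [hp1, hH]
    exact mul_ne_zero hε (mul_ne_zero (kap_ne_zero p m hm) hne)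

/-- The multidegree in which the Euler cocycle of `S` is evaluated. -/
def nS (ty : ι → Fin e) : List ι → Fin e → ℕ
  | [] => 0
  | s :: S => nS ty S + Pi.single (ty s) (p - 1)

lemma nS_dvd (ty : ι → Fin e) (S : List ι) (j : Fin e) : p - 1 ∣ nS p ty S j := by
  induction S with
  | nil => simp [nS]
  | cons s S ih =>
    rw [nS, Pi.add_apply]
    refine dvd_add ih ?_
    by_cases h : j = ty s
    · subst h; simp
    · simp [h]

lemma nS_zero (ty : ι → Fin e) (S : List ι) (j : Fin e) (h : ∀ s ∈ S, ty s ≠ j) :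
    nS p ty S j = 0 := by
  induction S with
  | nil => simp [nS]
  | cons s S ih =>
    rw [nS, Pi.add_apply, ih fun s' hs' => h s' (List.mem_cons_of_mem _ hs')]
    simp [(h s (by simp)).symm]

lemma sum_nS (ty : ι → Fin e) (S : List ι) : ∑ j, nS p ty S j = S.length * (p - 1) := by
  induction S with
  | nil => simp [nS]
  | cons s S ih =>
    simp only [nS, Pi.add_apply, Finset.sum_add_distrib, ih, List.length_cons]
    rw [Finset.sum_pi_single']
    simp
    ring

include ha in
/-- The Euler cocycle does not vanish on the resolution family. The factors are ordered by
decreasing leading index `ty`, so that while a factor is read, later directions have degree `0` and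
earlier ones do not move its label. -/
lemma ev_eps_ne_zero (ty : ι → Fin e) (h1 : ∀ s, ℓ s (ty s) = 1)
    (h0 : ∀ s j, j < ty s → ℓ s j = 0) (S : List ι) (hS : S.Pairwise fun s s' => ty s' ≤ ty s) :
    ev (eps p S) (a (nS p ty S)) ≠ 0 := by
  induction S with
  | nil =>
    have : dd (Xop p (trL p ℓ)) a 0 = 0 := dd_eq_zero _ _ _ (by simp)
    rw [nS, ha 0, this]
    simp [augF, eps]
  | cons s S ih =>
    rw [List.pairwise_cons] at hS
    have h2 := Hval_block p ℓ a ha s (ty s) (eps p S) (fun u t => eps_shift p S u t) (h1 s) (h0 s)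
      (nS p ty (s :: S)) (nS p ty S) rfl (nS_dvd p ty S _) ?_ (ih hS.2)
    · have hid : trM p ℓ (ty s) 0 = id := by funext τ s'; simp [trM]
      rw [Hval, hid, mapL_id] at h2
      convert h2 using 1
      rw [Module.End.one_apply]
      congr 2
    · intro j hj
      apply nS_zero
      intro s' hs' heq
      rcases List.mem_cons.1 hs' with rfl | hs'
      · exact absurd heq hj.ne
      · have := hS.1 s' hs'
        rw [heq] at this
        exact absurd hj (not_lt.2 this)

end Eval

/-! ### Normalized functionals and coset sums -/

section Radon

variable (p : ℕ) [Fact p.Prime] (e : ℕ)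

/-- Linear functionals on `(ℤ/p)^e` whose first nonzero coefficient is `1`: representatives of the
nonzero functionals up to scaling. -/
abbrev NL := {v : Fin e → ZMod p // ∃ k, v k = 1 ∧ ∀ j, j < k → v j = 0}

variable {e}

lemma exists_normalized (v : Fin e → ZMod p) (hv : v ≠ 0) :
    ∃ (c : ZMod p) (w : NL p e), c ≠ 0 ∧ v = c • w.1 := by
  have hex : ∃ k, v k ≠ 0 := by
    by_contra h
    push Not at h
    exact hv (funext h)
  obtain ⟨k, hk, hmin⟩ := WellFounded.has_min (wellFounded_lt (α := Fin e)) {k | v k ≠ 0} hex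
  refine ⟨v k, ⟨(v k)⁻¹ • v, k, ?_, ?_⟩, hk, ?_⟩
  · simp [inv_mul_cancel₀ (show v k ≠ 0 from hk)]
  · intro j hj
    have : v j = 0 := by
      by_contra h
      exact hmin j h hj
    simp [this]
  · rw [smul_smul, mul_inv_cancel₀ hk, one_smul]

lemma normalized_ext (c c' : ZMod p) (v v' : NL p e) (hc : c ≠ 0) (hc' : c' ≠ 0)
    (h : c • v.1 = c' • v'.1) : c = c' ∧ v = v' := by
  obtain ⟨v, k, hk, hk0⟩ := v
  obtain ⟨v', k', hk', hk0'⟩ := v'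
  simp only at h
  have hkk : k = k' := by
    rcases lt_trichotomy k k' with hlt | heq | hlt
    · have := congrFun h k
      simp [hk, hk0' k hlt, hc] at this
    · exact heq
    · have := congrFun h k'
      simp [hk', hk0 k' hlt] at this
      exact absurd this.symm hc'
  subst hkk
  have hcc : c = c' := by simpa [hk, hk'] using congrFun h k
  subst hcc
  refine ⟨rfl, Subtype.ext ?_⟩
  funext j
  have := congrFun h j
  simpa [hc] using this

/-- Scalar multiplication identifies nonzero functionals with pairs of a nonzero scalar and a
normalized functional. -/
lemma card_NL : Fintype.card (NL p e) * (p - 1) = p ^ e - 1 := by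
  have h1 : Fintype.card {v : Fin e → ZMod p // v ≠ 0} = p ^ e - 1 := by
    rw [Fintype.card_subtype_compl, Fintype.card_fun, ZMod.card, Fintype.card_fin]
    simp
  have h2 : Fintype.card {c : ZMod p // c ≠ 0} = p - 1 := by
    rw [Fintype.card_subtype_compl, ZMod.card]
    simp
  rw [← h1, ← h2, ← Fintype.card_prod]
  have hnz : ∀ w : NL p e, w.1 ≠ 0 := by
    intro w h
    obtain ⟨k, hk, -⟩ := w.2
    rw [h] at hk
    simp at hk
  refine Fintype.card_of_bijective
    (f := fun q : NL p e × {c : ZMod p // c ≠ 0} =>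
      (⟨q.2.1 • q.1.1, smul_ne_zero q.2.2 (hnz q.1)⟩ : {v : Fin e → ZMod p // v ≠ 0})) ⟨?_, ?_⟩
  · rintro ⟨v, c, hc⟩ ⟨v', c', hc'⟩ h
    obtain ⟨h1, h2⟩ := normalized_ext p c c' v v' hc hc' (congrArg Subtype.val h)
    subst h1; subst h2; rfl
  · rintro ⟨v, hv⟩
    obtain ⟨c, w, hc, hw⟩ := exists_normalized p v hv
    exact ⟨(w, ⟨c, hc⟩), Subtype.ext hw.symm⟩

/-- The sum of `F` over the coset where the functional `v` takes the value `c`. -/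
def cosum (F : (Fin e → ZMod p) → ℝ) (v : Fin e → ZMod p) (c : ZMod p) : ℝ :=
  ∑ i, if v ⬝ᵥ i = c then F i else 0

lemma sum_cosum (F : (Fin e → ZMod p) → ℝ) (v : Fin e → ZMod p) :
    ∑ c, cosum p F v c = ∑ i, F i := by
  unfold cosum
  rw [Finset.sum_comm]
  simp

/-- All values are taken equally often by `v ↦ v ⬝ᵥ u` when `u ≠ 0`. -/
lemma count_functionals (u : Fin e → ZMod p) (hu : u ≠ 0) :
    p * (Finset.univ.filter fun v : Fin e → ZMod p => v ⬝ᵥ u = 0).card = p ^ e := by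
  obtain ⟨k, hk⟩ : ∃ k, u k ≠ 0 := by
    by_contra h
    push Not at h
    exact hu (funext h)
  have h1 : ∀ c : ZMod p, (Finset.univ.filter fun v : Fin e → ZMod p => v ⬝ᵥ u = c).card =
      (Finset.univ.filter fun v : Fin e → ZMod p => v ⬝ᵥ u = 0).card := by
    intro c
    refine Finset.card_bij (fun v _ => v - Pi.single k (c * (u k)⁻¹)) ?_ ?_ ?_
    · intro v hv
      simp only [Finset.mem_filter, Finset.mem_univ, true_and] at hv ⊢
      rw [sub_dotProduct, hv, single_dotProduct, inv_mul_cancel_right₀ hk, sub_self]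
    · intro v _ v' _ h
      exact sub_left_injective h
    · intro v hv
      simp only [Finset.mem_filter, Finset.mem_univ, true_and] at hv
      refine ⟨v + Pi.single k (c * (u k)⁻¹), ?_, by simp⟩
      simp only [Finset.mem_filter, Finset.mem_univ, true_and]
      rw [add_dotProduct, hv, single_dotProduct, inv_mul_cancel_right₀ hk, zero_add]
  have h2 := Finset.card_eq_sum_card_fiberwise (s := (Finset.univ : Finset (Fin e → ZMod p)))
    (t := (Finset.univ : Finset (ZMod p))) (f := fun v => v ⬝ᵥ u) (by intro x _; simp)
  rw [Finset.sum_congr rfl fun c _ => h1 c] at h2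
  simpa [ZMod.card] using h2.symm

/-- Injectivity of the finite Radon transform: a function all of whose sums over parallel
hyperplanes agree is constant. -/
lemma radon (F : (Fin e → ZMod p) → ℝ)
    (h : ∀ v : NL p e, ∀ c c', cosum p F v.1 c = cosum p F v.1 c') (g g' : Fin e → ZMod p) :
    F g = F g' := by
  have hp := (Fact.out : p.Prime)
  have hp0 : (p : ℝ) ≠ 0 := by exact_mod_cast hp.ne_zero
  have hcos : ∀ v : Fin e → ZMod p, v ≠ 0 → ∀ c, p * cosum p F v c = ∑ i, F i := by
    intro v hv c
    obtain ⟨a, w, ha, rfl⟩ := exists_normalized p v hv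
    have h1 : ∀ c, cosum p F (a • w.1) c = cosum p F w.1 (a⁻¹ * c) := by
      intro c
      unfold cosum
      refine Finset.sum_congr rfl fun i _ => ?_
      congr 1
      rw [smul_dotProduct, smul_eq_mul, eq_inv_mul_iff_mul_eq₀ ha]
    rw [h1, ← sum_cosum p F w.1, Finset.sum_congr rfl fun c' _ => h w c' (a⁻¹ * c)]
    simp [ZMod.card]
  -- Sum over all functionals of the coset sum through `g`, computed in two ways.
  have key : ∀ g : Fin e → ZMod p,
      p * ∑ v : Fin e → ZMod p, cosum p F v (v ⬝ᵥ g) =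
        (p ^ e : ℝ) * ∑ i, F i + ((p - 1) * p ^ e) * F g := by
    intro g
    have h2 : ∀ i : Fin e → ZMod p,
        (p : ℝ) * ∑ v : Fin e → ZMod p, (if v ⬝ᵥ i = v ⬝ᵥ g then F i else 0) =
          p ^ e * F i + if i = g then ((p - 1) * p ^ e) * F g else 0 := by
      intro i
      have h3 : ∀ v : Fin e → ZMod p, (v ⬝ᵥ i = v ⬝ᵥ g) ↔ v ⬝ᵥ (i - g) = 0 := by
        intro v; rw [dotProduct_sub, sub_eq_zero]
      simp only [h3]
      rw [← Finset.sum_filter, Finset.sum_const, nsmul_eq_mul]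
      split_ifs with hig
      · subst hig
        simp [ZMod.card]
        ring
      · have h4 := count_functionals p (i - g) (sub_ne_zero.2 hig)
        have h5 : (p : ℝ) * ((Finset.univ.filter
            fun v : Fin e → ZMod p => v ⬝ᵥ (i - g) = 0).card : ℝ) = p ^ e := by exact_mod_cast h4
        rw [← mul_assoc, h5, add_zero]
    unfold cosum
    rw [Finset.sum_comm, Finset.mul_sum, Finset.sum_congr rfl fun i _ => h2 i,
      Finset.sum_add_distrib, ← Finset.mul_sum]
    simp
  have hind : ∑ v : Fin e → ZMod p, cosum p F v (v ⬝ᵥ g) =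
      ∑ v : Fin e → ZMod p, cosum p F v (v ⬝ᵥ g') := by
    refine Finset.sum_congr rfl fun v _ => ?_
    by_cases hv : v = 0
    · simp [hv]
    · exact mul_left_cancel₀ hp0 ((hcos v hv _).trans (hcos v hv _).symm)
  have h6 := key g
  rw [hind, key g'] at h6
  have hp1 : ((p : ℝ) - 1) * p ^ e ≠ 0 := by
    have : (1 : ℝ) < p := by exact_mod_cast hp.one_lt
    refine mul_ne_zero (by linarith) (pow_ne_zero _ hp0)
  exact mul_left_cancel₀ hp1 (by linarith)

end Radon

/-! ### Barycentric subdivision -/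

section Sup

variable {K : Type*} [CommRing K] {V W : Type*}

/-- Chains that are combinations of lists with property `P`. -/
def Sup (K : Type*) [CommRing K] {V : Type*} (P : List V → Prop) : Submodule K (Ch K V) :=
  Submodule.span K ((fun t => Finsupp.single t 1) '' {t | P t})

lemma single_mem_Sup {P : List V → Prop} {t : List V} (h : P t) :
    (Finsupp.single t 1 : Ch K V) ∈ Sup K P :=
  Submodule.subset_span ⟨t, h, rfl⟩

lemma map_mem_of_Sup {C : Type*} [AddCommGroup C] [Module K C] {P : List V → Prop}
    (Φ : Ch K V →ₗ[K] C) (N : Submodule K C) (h : ∀ t, P t → Φ (Finsupp.single t 1) ∈ N)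
    {c : Ch K V} (hc : c ∈ Sup K P) : Φ c ∈ N := by
  have : Sup K P ≤ N.comap Φ := by
    refine Submodule.span_le.2 ?_
    rintro _ ⟨t, ht, rfl⟩
    exact h t ht
  exact this hc

lemma eq_of_Sup {C : Type*} [AddCommGroup C] [Module K C] {P : List V → Prop}
    (Φ Ψ : Ch K V →ₗ[K] C) (h : ∀ t, P t → Φ (Finsupp.single t 1) = Ψ (Finsupp.single t 1))
    {c : Ch K V} (hc : c ∈ Sup K P) : Φ c = Ψ c := by
  have := map_mem_of_Sup (Φ - Ψ) ⊥ (fun t ht => by simp [h t ht]) hc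
  simpa [sub_eq_zero] using this

lemma coneL_mem_Sup {P Q : List V → Prop} (v : V) (h : ∀ t, P t → Q (v :: t))
    {c : Ch K V} (hc : c ∈ Sup K P) : coneL v c ∈ Sup K Q :=
  map_mem_of_Sup (coneL v) _ (fun t ht => by simpa using single_mem_Sup (h t ht)) hc

lemma mapL_mem_Sup {P : List V → Prop} {Q : List W → Prop} (f : V → W)
    (h : ∀ t, P t → Q (t.map f)) {c : Ch K V} (hc : c ∈ Sup K P) : mapL f c ∈ Sup K Q :=
  map_mem_of_Sup (mapL f) _ (fun t ht => by simpa using single_mem_Sup (h t ht)) hc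

lemma Sup_mono {P Q : List V → Prop} (h : ∀ t, P t → Q t) : Sup K P ≤ Sup K Q :=
  Submodule.span_mono (Set.image_mono h)

lemma bdList_mem (t : List V) :
    (bdList t : Ch K V) ∈ Sup K (fun s : List V => s.length + 1 = t.length ∧ s.Sublist t) := by
  induction t with
  | nil => exact Submodule.zero_mem _
  | cons v t ih =>
    refine Submodule.sub_mem _ (single_mem_Sup ⟨rfl, List.sublist_cons_self v t⟩) ?_
    refine coneL_mem_Sup v ?_ ih
    rintro s ⟨h1, h2⟩
    exact ⟨by simp [h1], h2.cons_cons v⟩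

end Sup

section Sd

variable {K : Type*} [CommRing K] {E G : Type*} [NormedAddCommGroup E] [NormedSpace ℝ E]

/-- The barycenter of the simplex `v :: t` in the first component; the second component, which only
serves to make the group act freely on vertices, is that of the leading vertex. -/
def bary (v : E × G) (t : List (E × G)) : E × G :=
  (((v :: t).length : ℝ)⁻¹ • ((v :: t).map Prod.fst).sum, v.2)

/-- Subdivision of a single simplex, by recursion on a bound for its length. -/
def sdF (K : Type*) [CommRing K] : ℕ → List (E × G) → Ch K (E × G)
  | 0, _ => Finsupp.single [] 1
  | _ + 1, [] => Finsupp.single [] 1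
  | n + 1, v :: t => coneL (bary v t) (Finsupp.linearCombination K (sdF K n) (bdList (v :: t)))

/-- Barycentric subdivision of chains. -/
def sd (K : Type*) [CommRing K] : Ch K (E × G) →ₗ[K] Ch K (E × G) :=
  Finsupp.linearCombination K (fun t => sdF K t.length t)

lemma sd_single (t : List (E × G)) : sd K (Finsupp.single t 1) = sdF K t.length t := by
  simp [sd]

lemma sd_nil : sd K (Finsupp.single ([] : List (E × G)) 1) = Finsupp.single [] 1 := by
  rw [sd_single]; rfl

lemma sd_cons (v : E × G) (t : List (E × G)) :
    sd K (Finsupp.single (v :: t) 1) = coneL (bary v t) (sd K (bdList (v :: t))) := by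
  rw [sd_single, List.length_cons, sdF]
  congr 1
  refine eq_of_Sup _ _ ?_ (bdList_mem (v :: t))
  rintro s ⟨hs, -⟩
  have : t.length = s.length := by simpa using hs.symm
  rw [sd_single, this]
  simp

lemma sd_bd_list (n : ℕ) : ∀ t : List (E × G), t.length = n →
    sd K (bdList t) = bd (sd K (Finsupp.single t 1)) := by
  induction n with
  | zero =>
    intro t ht
    rw [List.length_eq_zero_iff.1 ht, sd_nil]
    simp [bdList]
  | succ n ih =>
    intro t ht
    match t with
    | v :: t =>
      have hlen : t.length = n := by simpa using ht
      have h1 : ((sd K).comp bd) (bdList (v :: t)) = (bd.comp (sd K)) (bdList (v :: t)) := by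
        refine eq_of_Sup _ _ ?_ (bdList_mem (v :: t))
        rintro s ⟨hs, -⟩
        rw [LinearMap.comp_apply, LinearMap.comp_apply, bd_single, one_smul]
        exact ih s (by simp at hs; omega)
      rw [LinearMap.comp_apply, LinearMap.comp_apply] at h1
      rw [sd_cons, bd_coneL, ← h1, bd_bdList]
      simp

lemma sd_bd (c : Ch K (E × G)) : sd K (bd c) = bd (sd K c) := by
  induction c using Finsupp.induction_linear with
  | zero => simp
  | add f g hf hg => simp [hf, hg]
  | single t a =>
    have h : (Finsupp.single t a : Ch K (E × G)) = a • Finsupp.single t 1 := by simp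
    rw [h, map_smul, map_smul, map_smul, map_smul, ← sd_bd_list _ t rfl]
    simp

lemma sd_mapL_list (T : E × G → E × G) (hT : ∀ v t, T (bary v t) = bary (T v) (t.map T)) (n : ℕ) :
    ∀ t : List (E × G), t.length = n →
      sd K (Finsupp.single (t.map T) 1) = mapL T (sd K (Finsupp.single t 1)) := by
  induction n with
  | zero =>
    intro t ht
    rw [List.length_eq_zero_iff.1 ht, List.map_nil, sd_nil]
    simp
  | succ n ih =>
    intro t ht
    match t with
    | v :: t =>
      have h1 : ((sd K).comp (mapL T)) (bdList (v :: t)) =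
          ((mapL T).comp (sd K)) (bdList (v :: t)) := by
        refine eq_of_Sup _ _ ?_ (bdList_mem (v :: t))
        rintro s ⟨hs, -⟩
        rw [LinearMap.comp_apply, LinearMap.comp_apply, mapL_single]
        exact ih s (by simp at hs ht; omega)
      rw [LinearMap.comp_apply, LinearMap.comp_apply] at h1
      have h2 : (mapL T (bdList (v :: t)) : Ch K (E × G)) = bdList ((v :: t).map T) := by
        have := mapL_bd (K := K) T (Finsupp.single (v :: t) 1)
        simpa using this
      rw [sd_cons, mapL_coneL, ← h1, h2, hT, List.map_cons, sd_cons]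

lemma sd_mapL (T : E × G → E × G) (hT : ∀ v t, T (bary v t) = bary (T v) (t.map T))
    (c : Ch K (E × G)) : sd K (mapL T c) = mapL T (sd K c) := by
  induction c using Finsupp.induction_linear with
  | zero => simp
  | add f g hf hg => simp [hf, hg]
  | single t a =>
    have h : (Finsupp.single t a : Ch K (E × G)) = a • Finsupp.single t 1 := by simp
    rw [h, map_smul, map_smul, map_smul, map_smul, ← sd_mapL_list T hT _ t rfl]
    simp

lemma avg_mem {A : Set E} (hA : Convex ℝ A) (L : List E) (hL : L ≠ []) (h : ∀ x ∈ L, x ∈ A) :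
    (L.length : ℝ)⁻¹ • L.sum ∈ A := by
  have hn : (L.length : ℝ) ≠ 0 := by
    exact_mod_cast (List.length_pos_of_ne_nil hL).ne'
  have h1 : L.sum = ∑ i : Fin L.length, L.get i := by
    conv_lhs => rw [← List.ofFn_get L]
    rw [List.sum_ofFn]
  rw [h1, Finset.smul_sum]
  refine hA.sum_mem (fun _ _ => by positivity) ?_ (fun i _ => h _ (List.get_mem L i))
  simp [hn]

lemma dist_avg_le (L : List E) (D : ℝ) (h : ∀ x ∈ L, ∀ y ∈ L, dist x y ≤ D) (v : E)
    (hv : v ∈ L) (M : ℕ) (hM : L.length ≤ M + 1) :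
    dist v ((L.length : ℝ)⁻¹ • L.sum) ≤ (M / (M + 1) : ℝ) * D := by
  have hD : 0 ≤ D := by simpa using h v hv v hv
  have hpos : 0 < L.length := List.length_pos_of_mem hv
  have hn : (0 : ℝ) < L.length := by exact_mod_cast hpos
  have h1 : L.sum = ∑ i : Fin L.length, L.get i := by
    conv_lhs => rw [← List.ofFn_get L]
    rw [List.sum_ofFn]
  obtain ⟨i, rfl⟩ := List.get_of_mem hv
  have h2 : L.get i - (L.length : ℝ)⁻¹ • L.sum =
      (L.length : ℝ)⁻¹ • ∑ j : Fin L.length, (L.get i - L.get j) := by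
    rw [Finset.sum_sub_distrib, ← h1, smul_sub]
    simp only [Finset.sum_const, Finset.card_univ, Fintype.card_fin]
    rw [← Nat.cast_smul_eq_nsmul ℝ, smul_smul, inv_mul_cancel₀ hn.ne', one_smul]
  have h3 : ∑ j : Fin L.length, ‖L.get i - L.get j‖ ≤ ((L.length : ℝ) - 1) * D := by
    rw [← Finset.add_sum_erase _ _ (Finset.mem_univ i), sub_self, norm_zero, zero_add]
    refine (Finset.sum_le_card_nsmul _ _ D fun j _ => ?_).trans ?_
    · rw [← dist_eq_norm]
      exact h _ (List.get_mem L i) _ (List.get_mem L j)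
    · rw [Finset.card_erase_of_mem (Finset.mem_univ i), Finset.card_univ, Fintype.card_fin,
        nsmul_eq_mul, Nat.cast_sub hpos, Nat.cast_one]
  rw [dist_eq_norm, h2, norm_smul, norm_inv, Real.norm_natCast]
  calc (L.length : ℝ)⁻¹ * ‖∑ j : Fin L.length, (L.get i - L.get j)‖
      ≤ (L.length : ℝ)⁻¹ * (((L.length : ℝ) - 1) * D) := by
        gcongr
        exact (norm_sum_le _ _).trans h3
    _ = (1 - (L.length : ℝ)⁻¹) * D := by field_simp
    _ ≤ (M / (M + 1) : ℝ) * D := by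
        refine mul_le_mul_of_nonneg_right ?_ hD
        have h4 : ((M : ℝ) / (M + 1)) = 1 - (M + 1 : ℝ)⁻¹ := by field_simp; ring
        rw [h4]
        have h5 : (L.length : ℝ) ≤ M + 1 := by exact_mod_cast hM
        have := inv_anti₀ hn h5
        linarith

/-- Subdivision keeps simplices inside convex sets and shrinks their diameter. -/
lemma sd_small_list (M n : ℕ) (hnM : n ≤ M + 1) : ∀ (t : List (E × G)), t.length = n →
    ∀ (A : Set E), Convex ℝ A → ∀ D : ℝ, (∀ x ∈ t, x.1 ∈ A) →
    (∀ x ∈ t, ∀ y ∈ t, dist x.1 y.1 ≤ D) →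
    sd K (Finsupp.single t 1) ∈ Sup K (fun s : List (E × G) => s.length = n ∧ (∀ x ∈ s, x.1 ∈ A) ∧
      ∀ x ∈ s, ∀ y ∈ s, dist x.1 y.1 ≤ (M / (M + 1) : ℝ) * D) := by
  induction n with
  | zero =>
    intro t ht A _ D _ _
    rw [List.length_eq_zero_iff.1 ht, sd_nil]
    exact single_mem_Sup (by simp)
  | succ n ih =>
    intro t ht A hA D hmem hdist
    match t with
    | v :: t =>
      have hlen : t.length = n := by simpa using ht
      have hD : 0 ≤ D := by simpa using hdist v (by simp) v (by simp)
      have hb : (bary v t).1 ∈ A := by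
        have := avg_mem hA ((v :: t).map Prod.fst) (by simp) (by
          intro x hx
          obtain ⟨y, hy, rfl⟩ := List.mem_map.1 hx
          exact hmem y hy)
        rwa [List.length_map] at this
      have hbd : ∀ x ∈ v :: t, dist x.1 (bary v t).1 ≤ (M / (M + 1) : ℝ) * D := by
        intro x hx
        have := dist_avg_le ((v :: t).map Prod.fst) D (by
          intro x hx y hy
          obtain ⟨x, hx', rfl⟩ := List.mem_map.1 hx
          obtain ⟨y, hy', rfl⟩ := List.mem_map.1 hy
          exact hdist x hx' y hy') x.1 (List.mem_map.2 ⟨x, hx, rfl⟩) M (by simp; omega)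
        rwa [List.length_map] at this
      rw [sd_cons]
      have h1 : sd K (bdList (v :: t)) ∈ Sup K (fun s : List (E × G) => s.length = n ∧
          (∀ x ∈ s, x.1 ∈ A ∩ Metric.closedBall (bary v t).1 ((M / (M + 1) : ℝ) * D)) ∧
          ∀ x ∈ s, ∀ y ∈ s, dist x.1 y.1 ≤ (M / (M + 1) : ℝ) * D) := by
        refine map_mem_of_Sup _ _ ?_ (bdList_mem (v :: t))
        rintro s ⟨hs, hsub⟩
        refine ih (by omega) s (by simp at hs; omega) _
          (hA.inter (convex_closedBall _ _)) D ?_ ?_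
        · intro x hx
          exact ⟨hmem x (hsub.subset hx), hbd x (hsub.subset hx)⟩
        · intro x hx y hy
          exact hdist x (hsub.subset hx) y (hsub.subset hy)
      refine coneL_mem_Sup _ ?_ h1
      rintro s ⟨hs1, hs2, hs3⟩
      refine ⟨by simp [hs1], ?_, ?_⟩
      · intro x hx
        rcases List.mem_cons.1 hx with rfl | hx
        · exact hb
        · exact (hs2 x hx).1
      · intro x hx y hy
        rcases List.mem_cons.1 hx with rfl | hx <;> rcases List.mem_cons.1 hy with rfl | hy
        · rw [dist_self]; positivity
        · rw [dist_comm]; exact (hs2 y hy).2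
        · exact (hs2 x hx).2
        · exact hs3 x hx y hy

/-- Lists of at most `M + 1` vertices lying in one of the sets `A i`, of diameter at most `D`. -/
def Small {I : Type*} (A : I → Set E) (M : ℕ) (D : ℝ) (s : List (E × G)) : Prop :=
  s.length ≤ M + 1 ∧ ∃ i, (∀ x ∈ s, x.1 ∈ A i) ∧ ∀ x ∈ s, ∀ y ∈ s, dist x.1 y.1 ≤ D

lemma sd_small {I : Type*} (A : I → Set E) (hA : ∀ i, Convex ℝ (A i)) (M : ℕ) (D : ℝ)
    {c : Ch K (E × G)} (hc : c ∈ Sup K (Small A M D)) :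
    sd K c ∈ Sup K (Small A M ((M / (M + 1) : ℝ) * D)) := by
  refine map_mem_of_Sup _ _ ?_ hc
  rintro t ⟨hlen, i, h1, h2⟩
  refine Sup_mono ?_ (sd_small_list M t.length hlen t rfl (A i) (hA i) D h1 h2)
  rintro s ⟨hs1, hs2, hs3⟩
  exact ⟨by omega, i, hs2, hs3⟩

lemma sd_pow_small {I : Type*} (A : I → Set E) (hA : ∀ i, Convex ℝ (A i)) (M : ℕ) (D : ℝ)
    {c : Ch K (E × G)} (hc : c ∈ Sup K (Small A M D)) (J : ℕ) :
    (sd K)^[J] c ∈ Sup K (Small A M ((M / (M + 1) : ℝ) ^ J * D)) := by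
  induction J with
  | zero => simpa using hc
  | succ J ih =>
    rw [Function.iterate_succ', pow_succ', mul_assoc]
    exact sd_small A hA M _ ih

/-- Subdivision is an equivariant chain map, so it preserves resolution families. -/
lemma IsResFam.sd_pow (p : ℕ) [Fact p.Prime] {e : ℕ} (T : Fin e → E × G → E × G)
    (hT : ∀ k v t, T k (bary v t) = bary (T k v) (t.map (T k)))
    {a : (Fin e → ℕ) → Ch (ZMod p) (E × G)} (ha : IsResFam p T a) (J : ℕ) :
    IsResFam p T (fun n => (sd (ZMod p))^[J] (a n)) := by
  induction J with
  | zero => exact ha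
  | succ J ih =>
    have := IsResFam.map p T T (sd (ZMod p)) (fun k c => sd_mapL (T k) (hT k) c) sd_bd sd_nil ih
    simpa only [Function.iterate_succ', Function.comp_apply] using this

end Sd

/-! ### The configuration space -/

section Conf

variable (p : ℕ) [Fact p.Prime] (e : ℕ) (M : ℕ)

/-- The elementary abelian group `(ℤ/p)^e`. -/
abbrev Grp := Fin e → ZMod p

/-- Arrays of weights: `y v i` is the weight of the vertex `v` of the simplex in the `i`-th copy. -/
abbrev Arr := Fin (M + 1) → Grp p e → ℝ

variable {e M}

/-- The action of the group on arrays, permuting the copies. -/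
def shiftL (g : Grp p e) : Arr p e M →ₗ[ℝ] Arr p e M where
  toFun y := fun v i => y v (i - g)
  map_add' _ _ := rfl
  map_smul' _ _ := rfl

@[simp] lemma shiftL_apply (g : Grp p e) (y : Arr p e M) (v : Fin (M + 1)) (i : Grp p e) :
    shiftL p g y v i = y v (i - g) := rfl

/-- A maximal simplex of the deleted join: the vertex `v` may carry weight only in copy `c v`. -/
def cell (c : Fin (M + 1) → Grp p e) : Set (Arr p e M) :=
  {y | (∀ v i, 0 ≤ y v i) ∧ ∑ v, ∑ i, y v i = 1 ∧ ∀ v i, i ≠ c v → y v i = 0}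

/-- The deleted join, the `(M+1)`-fold join of the discrete group. -/
def conf (M : ℕ) : Set (Arr p e M) := ⋃ c, cell p c

lemma convex_cell (c : Fin (M + 1) → Grp p e) : Convex ℝ (cell p c) := by
  rintro y ⟨hy1, hy2, hy3⟩ z ⟨hz1, hz2, hz3⟩ a b ha hb hab
  refine ⟨?_, ?_, ?_⟩
  · intro v i
    have := hy1 v i
    have := hz1 v i
    simp only [Pi.add_apply, Pi.smul_apply, smul_eq_mul]
    positivity
  · simp only [Pi.add_apply, Pi.smul_apply, smul_eq_mul, Finset.sum_add_distrib, ← Finset.mul_sum,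
      hy2, hz2]
    linarith
  · intro v i h
    simp [hy3 v i h, hz3 v i h]

lemma le_one_of_cell {c : Fin (M + 1) → Grp p e} {y : Arr p e M} (hy : y ∈ cell p c)
    (v : Fin (M + 1)) (i : Grp p e) : y v i ≤ 1 := by
  obtain ⟨h1, h2, -⟩ := hy
  rw [← h2]
  calc y v i ≤ ∑ i, y v i :=
        Finset.single_le_sum (f := fun i => y v i) (fun i _ => h1 v i) (Finset.mem_univ i)
    _ ≤ _ := Finset.single_le_sum (f := fun v => ∑ i, y v i)
        (fun v _ => Finset.sum_nonneg fun i _ => h1 v i) (Finset.mem_univ v)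

lemma isCompact_cell (c : Fin (M + 1) → Grp p e) : IsCompact (cell p c) := by
  refine IsCompact.of_isClosed_subset (isCompact_Icc (a := (0 : Arr p e M)) (b := 1)) ?_ ?_
  · have h1 : IsClosed {y : Arr p e M | ∀ v i, 0 ≤ y v i} := by
      simp only [Set.ofPred_forall]
      exact isClosed_iInter fun v => isClosed_iInter fun i =>
        isClosed_le continuous_const (by fun_prop)
    have h2 : IsClosed {y : Arr p e M | ∑ v, ∑ i, y v i = 1} :=
      isClosed_eq (by fun_prop) continuous_const
    have h3 : IsClosed {y : Arr p e M | ∀ v i, i ≠ c v → y v i = 0} := by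
      simp only [Set.ofPred_forall]
      exact isClosed_iInter fun v => isClosed_iInter fun i => isClosed_iInter fun _ =>
        isClosed_eq (by fun_prop) continuous_const
    exact h1.inter (h2.inter h3)
  · intro y hy
    exact ⟨fun v i => hy.1 v i, fun v i => le_one_of_cell p hy v i⟩

lemma isCompact_conf : IsCompact (conf p M : Set (Arr p e M)) :=
  isCompact_iUnion fun c => isCompact_cell p c

/-- The vertex of the deleted join given by vertex `v` in copy `i`. -/
def pt (v : Fin (M + 1)) (i : Grp p e) : Arr p e M := Pi.single v (Pi.single i 1)

lemma pt_apply (v w : Fin (M + 1)) (i j : Grp p e) :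
    pt p v i w j = if w = v ∧ j = i then 1 else 0 := by
  unfold pt
  by_cases h : w = v
  · subst h
    by_cases h' : j = i
    · subst h'; simp
    · simp [h']
  · simp [h]

lemma pt_mem_cell (c : Fin (M + 1) → Grp p e) (v : Fin (M + 1)) : pt p v (c v) ∈ cell p c := by
  refine ⟨?_, ?_, ?_⟩
  · intro w j
    rw [pt_apply]
    split_ifs <;> norm_num
  · have : ∀ w j, pt p v (c v) w j = if w = v then (if j = c v then 1 else 0) else 0 := by
      intro w j
      rw [pt_apply, ite_and]
    simp only [this]
    simp
  · intro w j h
    rw [pt_apply, if_neg]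
    rintro ⟨rfl, h'⟩
    exact h h'

lemma shiftL_pt (g : Grp p e) (v : Fin (M + 1)) (i : Grp p e) :
    shiftL p g (pt p v i) = pt p v (i + g) := by
  funext w j
  rw [shiftL_apply, pt_apply, pt_apply]
  simp only [sub_eq_iff_eq_add]

lemma dist_le_one {c : Fin (M + 1) → Grp p e} {y z : Arr p e M} (hy : y ∈ cell p c)
    (hz : z ∈ cell p c) : dist y z ≤ 1 := by
  refine (dist_pi_le_iff zero_le_one).2 fun v => (dist_pi_le_iff zero_le_one).2 fun i => ?_
  rw [Real.dist_eq, abs_le]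
  have h1 := hy.1 v i
  have h2 := hz.1 v i
  have h3 := le_one_of_cell p hy v i
  have h4 := le_one_of_cell p hz v i
  constructor <;> linarith

/-- The generators of the group acting on arrays with a marker in the group. -/
def genT (k : Fin e) (x : Arr p e M × Grp p e) : Arr p e M × Grp p e :=
  (shiftL p (Pi.single k 1) x.1, x.2 + Pi.single k 1)

lemma genT_iterate (k : Fin e) (i : ℕ) (x : Arr p e M × Grp p e) :
    (genT p k)^[i] x = (shiftL p (i • Pi.single k 1) x.1, x.2 + i • Pi.single k 1) := by
  induction i with
  | zero =>
    ext
    · simp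
    · simp
  | succ i ih =>
    rw [Function.iterate_succ_apply', ih]
    ext v j
    · simp only [genT, shiftL_apply, succ_nsmul]
      rw [sub_sub, add_comm]
    · simp only [genT, succ_nsmul]
      rw [add_assoc]

lemma genT_pow (k : Fin e) : (genT p k : Arr p e M × Grp p e → _)^[p] = id := by
  have h0 : p • (Pi.single k 1 : Grp p e) = 0 := by
    rw [← Nat.cast_smul_eq_nsmul (ZMod p)]
    simp
  funext x
  rw [genT_iterate, h0]
  ext <;> simp

lemma genT_comm (k l : Fin e) (x : Arr p e M × Grp p e) :
    genT p k (genT p l x) = genT p l (genT p k x) := by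
  ext v j
  · simp only [genT, shiftL_apply]
    rw [sub_right_comm]
  · simp only [genT]
    rw [add_right_comm]

lemma genT_bary (k : Fin e) (v : Arr p e M × Grp p e) (t : List (Arr p e M × Grp p e)) :
    genT p k (bary v t) = bary (genT p k v) (t.map (genT p k)) := by
  unfold bary
  refine Prod.ext ?_ rfl
  simp only [genT, map_smul, map_list_sum, List.map_map, List.map_cons, List.length_cons,
    List.length_map]
  rfl

/-- Lists with `m` entries of the form `pt v (c v)` with `v < m`. -/
def Lad (m : ℕ) (s : List (Arr p e M × Grp p e)) : Prop :=
  s.length = m ∧ ∃ c : Fin (M + 1) → Grp p e, ∀ x ∈ s, ∃ v : Fin (M + 1), v.val < m ∧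
    x.1 = pt p v (c v)

lemma Lad.genT {m : ℕ} {s : List (Arr p e M × Grp p e)} (h : Lad p m s) (k : Fin e) :
    Lad p m (s.map (genT p k)) := by
  obtain ⟨h1, c, hc⟩ := h
  refine ⟨by simp [h1], fun v => c v + Pi.single k 1, ?_⟩
  intro x hx
  obtain ⟨y, hy, rfl⟩ := List.mem_map.1 hx
  obtain ⟨v, hv, hyv⟩ := hc y hy
  exact ⟨v, hv, by rw [VKF.genT, hyv, shiftL_pt]⟩

lemma Xop_mem_Sup {V : Type*} {P : List V → Prop} (T : Fin e → V → V)
    (h : ∀ k t, P t → P (t.map (T k))) (k : Fin e) (m : ℕ) {c : Ch (ZMod p) V}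
    (hc : c ∈ Sup (ZMod p) P) : Xop p T k m c ∈ Sup (ZMod p) P := by
  have h1 : ∀ i : ℕ, mapL ((T k)^[i]) c ∈ Sup (ZMod p) P := by
    intro i
    induction i with
    | zero => rw [Function.iterate_zero, mapL_id]; exact hc
    | succ i ih =>
      rw [Function.iterate_succ', ← mapL_comp]
      exact mapL_mem_Sup (T k) (h k) ih
  by_cases hm : Odd m
  · rw [Xop_odd p T k m hm]
    exact Submodule.sub_mem _ (h1 1) hc
  · rw [Xop_even p T k m hm]
    exact Submodule.sum_mem _ fun i _ => h1 i

/-- Coning off with new vertices of the join keeps the resolution family inside the deleted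
join. -/
lemma resFam_mem (c : (Fin e → ℕ) → Ch (ZMod p) (Arr p e M × Grp p e))
    (hc : ∀ n, c n = coneL (pt p ⟨min (∑ j, n j) M, by omega⟩ 0, 0)
      (dd (Xop p (genT p)) c n + augF p _ n)) (m : ℕ) :
    ∀ n : Fin e → ℕ, ∑ j, n j = m → m ≤ M → c n ∈ Sup (ZMod p) (Lad p (m + 1)) := by
  induction m with
  | zero =>
    intro n hn _
    have hn0 : n = 0 := by
      funext j
      exact (Finset.sum_eq_zero_iff.1 hn) j (Finset.mem_univ j)
    subst hn0
    have h0 : dd (Xop p (genT p)) c 0 = 0 := dd_eq_zero _ _ _ (by simp)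
    rw [hc, h0, augF, if_pos rfl, zero_add (Finsupp.single _ _), coneL_single]
    refine single_mem_Sup ⟨rfl, fun _ => 0, ?_⟩
    intro x hx
    rw [List.mem_singleton.1 hx]
    exact ⟨_, by simp, rfl⟩
  | succ m ih =>
    intro n hn hM
    have h1 : dd (Xop p (genT p)) c n + augF p _ n ∈ Sup (ZMod p) (Lad p (M := M) (m + 1)) := by
      have haug : augF p (Arr p e M × Grp p e) n = 0 := by
        rw [augF, if_neg]
        rintro rfl
        simp at hn
      rw [haug, add_zero]
      refine Submodule.sum_mem _ fun k _ => ?_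
      split_ifs with hk
      · exact Submodule.zero_mem _
      · refine Submodule.smul_mem _ _ (Xop_mem_Sup p _ (fun k t ht => ht.genT p k) k _ ?_)
        refine ih _ ?_ (by omega)
        have := sum_dec n k hk
        omega
    rw [hc]
    refine coneL_mem_Sup _ ?_ h1
    rintro s ⟨hs, c', hc'⟩
    refine ⟨by simp [hs], Function.update c' ⟨min (∑ j, n j) M, by omega⟩ 0, ?_⟩
    intro x hx
    rcases List.mem_cons.1 hx with rfl | hx
    · refine ⟨⟨min (∑ j, n j) M, by omega⟩, ?_, ?_⟩
      · simp only
        omega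
      · rw [Function.update_self]
    · obtain ⟨v, hv, hxv⟩ := hc' x hx
      refine ⟨v, by omega, ?_⟩
      rw [hxv, Function.update_of_ne]
      intro h
      have := congrArg Fin.val h
      simp only at this
      omega

lemma Lad.small {m : ℕ} (hm : m ≤ M + 1) {s : List (Arr p e M × Grp p e)} (h : Lad p m s) :
    Small (cell p) M 1 s := by
  obtain ⟨h1, c, hc⟩ := h
  have hx : ∀ x ∈ s, x.1 ∈ cell p c := by
    intro x hx
    obtain ⟨v, -, hv⟩ := hc x hx
    rw [hv]
    exact pt_mem_cell p c v
  exact ⟨by omega, c, hx, fun x hx' y hy' => dist_le_one p (hx x hx') (hx y hy')⟩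

end Conf

/-! ### Equivariant maps from the deleted join to regular representations -/

section Zero

variable (p : ℕ) [Fact p.Prime] {e : ℕ}

/-- The linear forms, one for each normalized functional and each of the `D` components. -/
def lab (D : ℕ) (s : NL p e × Fin D) (k : Fin e) : ZMod p := s.1.1 k

/-- A Sperner-type statement: an equivariant labelling of the deleted join by functions
`NL p e × Fin D → ZMod p` has arbitrarily small simplices on which every component of the label
takes all values. -/
lemma exists_full (D M : ℕ) (hM : M = (p ^ e - 1) * D)
    (η : Arr p e M × Grp p e → NL p e × Fin D → ZMod p)
    (hη : ∀ k x, η (genT p k x) = trL p (lab p D) k (η x)) (δ : ℝ) (hδ : 0 < δ) :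
    ∃ t, Small (cell p) M δ t ∧ t ≠ [] ∧ ∀ s c, ∃ x ∈ t, η x s = c := by
  classical
  by_contra hcon
  push Not at hcon
  let ty : NL p e × Fin D → Fin e := fun s => s.1.2.choose
  have hty : ∀ s, lab p D s (ty s) = 1 ∧ ∀ j, j < ty s → lab p D s j = 0 :=
    fun s => s.1.2.choose_spec
  let R : NL p e × Fin D → NL p e × Fin D → Prop := fun s s' => ty s' ≤ ty s
  have : Std.Total R := ⟨fun a b => le_total _ _⟩
  have : IsTrans _ R := ⟨fun a b c h1 h2 => le_trans h2 h1⟩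
  let S := (Finset.univ : Finset (NL p e × Fin D)).toList.insertionSort R
  have hS : S.Pairwise R := List.pairwise_insertionSort R _
  have hmem : ∀ s, s ∈ S := by
    intro s
    rw [List.mem_insertionSort]
    simp
  have hlen : S.length = Fintype.card (NL p e) * D := by
    rw [List.length_insertionSort, Finset.length_toList, Finset.card_univ, Fintype.card_prod,
      Fintype.card_fin]
  have hsum : ∑ j, nS p ty S j = M := by
    rw [sum_nS, hlen, hM, ← card_NL p, mul_right_comm]
  obtain ⟨a, ha⟩ := exists_family (Xop p (trL p (lab p D)))
    (fun n z => coneL 0 (z + augF p _ n))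
  obtain ⟨c, hc⟩ := exists_family (Xop p (genT p (M := M)))
    (fun n z => coneL (pt p ⟨min (∑ j, n j) M, by omega⟩ 0, 0) (z + augF p _ n))
  obtain ⟨J, hJ⟩ := exists_pow_lt_of_lt_one hδ
    (show (M / (M + 1) : ℝ) < 1 by rw [div_lt_one (by positivity)]; linarith)
  have hcs : c (nS p ty S) ∈ Sup (ZMod p) (Small (cell p) M 1) :=
    Sup_mono (fun t ht => ht.small p le_rfl) (resFam_mem p c hc M _ hsum le_rfl)
  have hsd := sd_pow_small (cell p) (convex_cell p) M 1 hcs J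
  have hres1 : IsResFam p (trL p (lab p D)) a :=
    isResFam_of_cone p _ (trL_pow p _) (trL_comm p _) _ a ha
  have hres2 : IsResFam p (genT p) c :=
    isResFam_of_cone p _ (genT_pow p) (genT_comm p) _ c hc
  have hres3 := IsResFam.map p (genT p) (trL p (lab p D)) (mapL η)
    (by
      intro k z
      rw [mapL_comp, mapL_comp]
      congr 2
      funext x
      exact hη k x)
    (mapL_bd η) (by simp) (hres2.sd_pow p _ (genT_bary p) J)
  have h1 := ev_resFam_eq p _ (trL_pow p (lab p D)) (trL_comm p _) 0 _ _ hres1 hres3 (eps p S)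
    (dl_eps p S) (fun k t => eps_shift p S (fun s => lab p D s k) t) (nS p ty S)
  refine ev_eps_ne_zero p (lab p D) a ha ty (fun s => (hty s).1) (fun s => (hty s).2) S hS ?_
  rw [h1]
  have h2 := map_mem_of_Sup ((ev (eps p S)).comp (mapL η)) ⊥ ?_ hsd
  · simpa using h2
  rintro t ⟨ht1, i, ht2, ht3⟩
  rw [LinearMap.comp_apply, mapL_single, ev_single, one_mul, Submodule.mem_bot]
  by_contra hne
  obtain ⟨s, b, hb⟩ := hcon t
    ⟨ht1, i, ht2, fun x hx y hy => (ht3 x hx y hy).trans (by linarith)⟩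
    (by rintro rfl; exact hne (eps_nil p S))
  obtain ⟨τ, hτ, hτb⟩ := eps_ne_zero p S _ hne s (hmem s) b
  obtain ⟨x, hx, rfl⟩ := List.mem_map.1 hτ
  exact hb x hx hτb

lemma cosum_shift (F : Grp p e → ℝ) (g v : Grp p e) (c : ZMod p) :
    cosum p (fun i => F (i - g)) v c = cosum p F v (c - v ⬝ᵥ g) := by
  unfold cosum
  rw [← Equiv.sum_comp (Equiv.addRight g)]
  refine Finset.sum_congr rfl fun i _ => ?_
  simp only [Equiv.coe_addRight, add_sub_cancel_right, dotProduct_add, eq_sub_iff_add_eq]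

/-- An equivariant map from the deleted join to `D` copies of the regular representation hits
the diagonal. -/
lemma exists_diag (D M : ℕ) (hM : M = (p ^ e - 1) * D) (F : Fin D → Arr p e M → Grp p e → ℝ)
    (hF : ∀ j i, ContinuousOn (fun y => F j y i) (conf p M))
    (heq : ∀ j g y i, F j (shiftL p g y) i = F j y (i - g)) :
    ∃ y ∈ conf p M, ∀ j i i', F j y i = F j y i' := by
  classical
  let Ψ : Arr p e M → NL p e × Fin D → ZMod p → ℝ := fun y s c => cosum p (F s.2 y) s.1.1 c
  have hΨc : ContinuousOn Ψ (conf p M) := by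
    refine continuousOn_pi.2 fun s => continuousOn_pi.2 fun c => ?_
    refine continuousOn_finsetSum _ fun i _ => ?_
    split_ifs
    · exact hF _ _
    · exact continuousOn_const
  have hshift : ∀ g y s c, Ψ (shiftL p g y) s c = Ψ y s (c - s.1.1 ⬝ᵥ g) := by
    intro g y s c
    refine Eq.trans ?_ (cosum_shift p (F s.2 y) g s.1.1 c)
    exact congrArg (fun f => cosum p f s.1.1 c) (funext fun i => heq s.2 g y i)
  -- The label of `(y, g)` is a position of the largest coset sum, chosen at `y` moved by `-g` and
  -- moved back, so that the labelling is equivariant although maximal positions are not unique.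
  have hmax : ∀ y s, ∃ c, ∀ c', Ψ y s c' ≤ Ψ y s c := fun y s => Finite.exists_max (Ψ y s)
  choose m hm using hmax
  let η : Arr p e M × Grp p e → NL p e × Fin D → ZMod p := fun x s =>
    m (shiftL p (-x.2) x.1) s + s.1.1 ⬝ᵥ x.2
  have hηmax : ∀ x s c, Ψ x.1 s c ≤ Ψ x.1 s (η x s) := by
    intro x s c
    have h := hm (shiftL p (-x.2) x.1) s (c - s.1.1 ⬝ᵥ x.2)
    rw [hshift, hshift] at h
    simpa [dotProduct_neg, η] using h
  have hη : ∀ k x, η (genT p k x) = trL p (lab p D) k (η x) := by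
    intro k x
    funext s
    have h1 : shiftL p (-(genT p k x).2) (genT p k x).1 = shiftL p (-x.2) x.1 := by
      funext v i
      have h2 : i - -(x.2 + Pi.single k 1) - Pi.single k 1 = i - -x.2 := by abel
      simp only [genT, shiftL_apply, h2]
    simp only [η, trL, h1, lab]
    simp only [genT, dotProduct_add, dotProduct_single, mul_one, add_assoc]
  let h : Arr p e M → (NL p e × Fin D) → ZMod p → ZMod p → ℝ := fun y s c c' => Ψ y s c - Ψ y s c'
  have hh : ContinuousOn (fun y => ‖h y‖) (conf p M) := by
    refine ContinuousOn.norm ?_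
    refine continuousOn_pi.2 fun s => continuousOn_pi.2 fun c => continuousOn_pi.2 fun c' => ?_
    have h1 := continuousOn_pi.1 (continuousOn_pi.1 hΨc s)
    exact (h1 c).sub (h1 c')
  have hne : (conf p M : Set (Arr p e M)).Nonempty :=
    ⟨pt p 0 0, Set.mem_iUnion.2 ⟨fun _ => 0, pt_mem_cell p _ 0⟩⟩
  obtain ⟨y, hy, hmin⟩ := (isCompact_conf p).exists_isMinOn hne hh
  refine ⟨y, hy, ?_⟩
  have hle : ∀ ω > 0, ‖h y‖ ≤ 2 * ω := by
    intro ω hω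
    have huc := (isCompact_conf p).uniformContinuousOn_of_continuous hΨc
    obtain ⟨δ, hδ, hδω⟩ := Metric.uniformContinuousOn_iff.1 huc ω hω
    obtain ⟨t, ⟨-, c0, ht1, ht2⟩, hnil, hfull⟩ :=
      exists_full p D M hM η hη (δ / 2) (by positivity)
    obtain ⟨x0, hx0⟩ := List.exists_mem_of_ne_nil t hnil
    have hconf : ∀ x ∈ t, x.1 ∈ conf p M := fun x hx => Set.mem_iUnion.2 ⟨c0, ht1 x hx⟩
    have hclose : ∀ x ∈ t, ∀ s c, |Ψ x.1 s c - Ψ x0.1 s c| ≤ ω := by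
      intro x hx s c
      have h1 := hδω x.1 (hconf x hx) x0.1 (hconf x0 hx0)
        (lt_of_le_of_lt (ht2 x hx x0 hx0) (by linarith))
      rw [← Real.dist_eq]
      exact (dist_le_pi_dist _ _ c).trans ((dist_le_pi_dist _ _ s).trans h1.le)
    have hone : ∀ s c c', Ψ x0.1 s c' - Ψ x0.1 s c ≤ 2 * ω := by
      intro s c c'
      obtain ⟨x, hx, rfl⟩ := hfull s c
      have h1 := hηmax x s c'
      have h2 := abs_le.1 (hclose x hx s c')
      have h3 := abs_le.1 (hclose x hx s (η x s))
      linarith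
    refine (hmin (hconf x0 hx0)).trans ?_
    have h0 : 0 ≤ 2 * ω := by positivity
    refine (pi_norm_le_iff_of_nonneg h0).2 fun s => (pi_norm_le_iff_of_nonneg h0).2 fun c =>
      (pi_norm_le_iff_of_nonneg h0).2 fun c' => ?_
    rw [Real.norm_eq_abs, abs_le]
    have h1 := hone s c c'
    have h2 := hone s c' c
    constructor <;> simp only [h] <;> linarith
  have hzero : h y = 0 := by
    rw [← norm_le_zero_iff]
    refine le_of_forall_pos_le_add fun ω hω => ?_
    have := hle (ω / 2) (by positivity)
    linarith
  intro j i i'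
  refine radon p (F j y) (fun v c c' => ?_) i i'
  have h1 := congrFun (congrFun (congrFun hzero (v, j)) c) c'
  exact sub_eq_zero.1 h1

end Zero

/-! ### The topological Tverberg theorem for prime powers -/

section Tverberg

/-- The degree one homogeneous extension of a function on the simplex to the nonnegative orthant,
with value `0` at the origin. -/
def homog {ι : Type*} [Fintype ι] (q : (ι → ℝ) → ℝ) (x : ι → ℝ) : ℝ :=
  (∑ v, x v) * q ((∑ v, x v)⁻¹ • x)

lemma continuousOn_homog {ι : Type*} [Fintype ι] (q : (ι → ℝ) → ℝ)
    (hq : ContinuousOn q (stdSimplex ℝ ι)) : ContinuousOn (homog q) {x | ∀ v, 0 ≤ x v} := by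
  have hnorm : ∀ x : ι → ℝ, (∀ v, 0 ≤ x v) → ∑ v, x v ≠ 0 →
      (∑ v, x v)⁻¹ • x ∈ stdSimplex ℝ ι := by
    intro x hx h
    have h0 : 0 ≤ ∑ v, x v := Finset.sum_nonneg fun v _ => hx v
    refine ⟨fun v => mul_nonneg (inv_nonneg.2 h0) (hx v), ?_⟩
    simp only [Pi.smul_apply, smul_eq_mul, ← Finset.mul_sum]
    exact inv_mul_cancel₀ h
  have hs : Continuous fun x : ι → ℝ => ∑ v, x v := by fun_prop
  intro x hx
  by_cases h : ∑ v, x v = 0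
  · -- Near the zero set of the weight the product is small because `q` is bounded.
    obtain ⟨C, hC⟩ := (isCompact_stdSimplex ℝ ι).exists_bound_of_continuousOn hq
    have hval : homog q x = 0 := by rw [homog, h, zero_mul]
    rw [ContinuousWithinAt, hval]
    have hlim : Filter.Tendsto (fun x : ι → ℝ => (∑ v, x v) * C) (nhdsWithin x {x | ∀ v, 0 ≤ x v})
        (nhds 0) := by
      have h1 : Filter.Tendsto (fun x : ι → ℝ => (∑ v, x v) * C) (nhds x)
          (nhds ((∑ v, x v) * C)) := (hs.mul continuous_const).tendsto x
      rw [h, zero_mul] at h1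
      exact h1.mono_left nhdsWithin_le_nhds
    refine squeeze_zero_norm' ?_ hlim
    filter_upwards [self_mem_nhdsWithin] with y hy
    have h0 : 0 ≤ ∑ v, y v := Finset.sum_nonneg fun v _ => hy v
    rw [homog, norm_mul, Real.norm_of_nonneg h0]
    by_cases hy0 : ∑ v, y v = 0
    · rw [hy0, zero_mul, zero_mul]
    · exact mul_le_mul_of_nonneg_left (hC _ (hnorm y hy hy0)) h0
  · refine ContinuousWithinAt.mul hs.continuousWithinAt ?_
    have h2 : ContinuousWithinAt (fun x : ι → ℝ => (∑ v, x v)⁻¹ • x)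
        ({x | ∀ v, 0 ≤ x v} ∩ {x | ∑ v, x v ≠ 0}) x :=
      (hs.continuousAt.inv₀ h).continuousWithinAt.smul continuousWithinAt_id
    have h3 := ContinuousWithinAt.comp (f := fun x : ι → ℝ => (∑ v, x v)⁻¹ • x)
      (hq _ (hnorm x hx h)) h2 (fun y hy => hnorm y hy.1 hy.2)
    refine h3.mono_of_mem_nhdsWithin ?_
    exact Filter.inter_mem self_mem_nhdsWithin
      (mem_nhdsWithin_of_mem_nhds ((isOpen_ne_fun hs continuous_const).mem_nhds h))

variable (p : ℕ) [Fact p.Prime] {e : ℕ}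

/-- The topological Tverberg theorem for a map with `D` real components, in terms of points of the
simplex with disjoint supports. -/
lemma tverberg (D M : ℕ) (hM : M = (p ^ e - 1) * (D + 1)) (q : Fin D → (Fin (M + 1) → ℝ) → ℝ)
    (hq : ∀ j, ContinuousOn (q j) (stdSimplex ℝ (Fin (M + 1)))) :
    ∃ (c : Fin (M + 1) → Grp p e) (x : Grp p e → Fin (M + 1) → ℝ),
      (∀ i, x i ∈ stdSimplex ℝ (Fin (M + 1))) ∧ (∀ i v, x i v ≠ 0 → c v = i) ∧
      ∀ j i i', q j (x i) = q j (x i') := by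
  let col : Grp p e → Arr p e M → Fin (M + 1) → ℝ := fun i y v => y v i
  let F : Fin (D + 1) → Arr p e M → Grp p e → ℝ := fun j y i =>
    Fin.cases (homog (fun _ => 1) (col i y)) (fun j => homog (q j) (col i y)) j
  have hcol : ∀ i, Continuous (col i) := fun i => by fun_prop
  have hmaps : ∀ i, Set.MapsTo (col i) (conf p M) {x | ∀ v, 0 ≤ x v} := by
    intro i y hy v
    obtain ⟨c, hc⟩ := Set.mem_iUnion.1 hy
    exact hc.1 v i
  obtain ⟨y, hy, hyF⟩ := exists_diag p (D + 1) M hM F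
    (by
      intro j i
      refine Fin.cases ?_ (fun j => ?_) j
      · exact (continuousOn_homog _ continuousOn_const).comp (hcol i).continuousOn (hmaps i)
      · exact (continuousOn_homog _ (hq j)).comp (hcol i).continuousOn (hmaps i))
    (fun j g y i => rfl)
  obtain ⟨c, hc1, hc2, hc3⟩ := Set.mem_iUnion.1 hy
  have hw : ∀ i i', ∑ v, y v i = ∑ v, y v i' := by
    intro i i'
    have := hyF 0 i i'
    simpa [F, homog, col] using this
  have hwne : ∀ i, ∑ v, y v i ≠ 0 := by
    intro i h
    rw [Finset.sum_comm] at hc2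
    rw [Finset.sum_eq_zero fun i' _ => (hw i' i).trans h] at hc2
    exact zero_ne_one hc2
  refine ⟨c, fun i => (∑ v, y v i)⁻¹ • col i y, ?_, ?_, ?_⟩
  · intro i
    refine ⟨fun v => mul_nonneg (inv_nonneg.2 (Finset.sum_nonneg fun v _ => hc1 v i)) (hc1 v i), ?_⟩
    simp only [Pi.smul_apply, smul_eq_mul, ← Finset.mul_sum]
    exact inv_mul_cancel₀ (hwne i)
  · intro i v hv
    by_contra hne
    exact hv (by simp [col, hc3 v i (Ne.symm hne)])
  · intro j i i'
    have h1 : (∑ v, y v i) * q j ((∑ v, y v i)⁻¹ • col i y) =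
        (∑ v, y v i') * q j ((∑ v, y v i')⁻¹ • col i' y) := hyF j.succ i i'
    rw [hw i i'] at h1
    have h2 := mul_left_cancel₀ (hwne i') h1
    simpa only [hw i i'] using h2

end Tverberg

/-! ### The constraint function -/

section Constraint

variable {ι : Type*} [Fintype ι]

/-- The elementary symmetric polynomial of degree `m`; on nonnegative vectors it vanishes exactly
when the support has fewer than `m` elements. -/
def esymm (m : ℕ) (x : ι → ℝ) : ℝ := ∑ T ∈ Finset.univ.powersetCard m, ∏ v ∈ T, x v

lemma continuous_esymm (m : ℕ) : Continuous (esymm m : (ι → ℝ) → ℝ) := by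
  unfold esymm
  fun_prop

lemma esymm_eq_zero_iff (m : ℕ) {x : ι → ℝ} (hx : ∀ v, 0 ≤ x v) :
    esymm m x = 0 ↔ (Finset.univ.filter fun v => x v ≠ 0).card < m := by
  unfold esymm
  rw [Finset.sum_eq_zero_iff_of_nonneg fun T _ => Finset.prod_nonneg fun v _ => hx v]
  constructor
  · intro h
    by_contra hlt
    obtain ⟨T, hT, hTm⟩ := Finset.exists_subset_card_eq (not_lt.1 hlt)
    have h1 := h T (Finset.mem_powersetCard.2 ⟨Finset.subset_univ T, hTm⟩)
    obtain ⟨v, hv, hv0⟩ := Finset.prod_eq_zero_iff.1 h1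
    exact (Finset.mem_filter.1 (hT hv)).2 hv0
  · intro h T hT
    by_contra hne
    have h1 : T ⊆ Finset.univ.filter fun v => x v ≠ 0 := by
      intro v hv
      exact Finset.mem_filter.2 ⟨Finset.mem_univ v, Finset.prod_ne_zero_iff.1 hne v hv⟩
    have h2 := Finset.card_le_card h1
    rw [(Finset.mem_powersetCard.1 hT).2] at h2
    omega

end Constraint

/-- Van Kampen–Flores in terms of points of the simplex with disjoint supports: adding the
constraint function as a further coordinate forces all supports to be small as soon as one is. -/
lemma vkf (p : ℕ) [Fact p.Prime] (e d M k : ℕ) (hM : M = (p ^ e - 1) * (d + 2))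
    (hk : M + 1 < p ^ e * (k + 2)) (q : Fin d → (Fin (M + 1) → ℝ) → ℝ)
    (hq : ∀ j, ContinuousOn (q j) (stdSimplex ℝ (Fin (M + 1)))) :
    ∃ (c : Fin (M + 1) → Grp p e) (x : Grp p e → Fin (M + 1) → ℝ),
      (∀ i, x i ∈ stdSimplex ℝ (Fin (M + 1))) ∧ (∀ i v, x i v ≠ 0 → c v = i) ∧
      (∀ i, (Finset.univ.filter fun v => x i v ≠ 0).card ≤ k + 1) ∧
      ∀ j i i', q j (x i) = q j (x i') := by
  obtain ⟨c, x, h1, h2, h3⟩ := tverberg p (d + 1) M hM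
    (Fin.cons (esymm (k + 2)) q : Fin (d + 1) → (Fin (M + 1) → ℝ) → ℝ)
    (by
      intro j
      refine Fin.cases ?_ (fun j => ?_) j
      · exact (continuous_esymm (ι := Fin (M + 1)) (k + 2)).continuousOn
      · exact hq j)
  obtain ⟨i0, hi0⟩ : ∃ i, (Finset.univ.filter fun v => x i v ≠ 0).card < k + 2 := by
    by_contra! hcon
    have hle : ∑ i, (Finset.univ.filter fun v => x i v ≠ 0).card ≤ M + 1 := by
      rw [← Finset.card_biUnion]
      · exact (Finset.card_le_univ _).trans (by simp)
      · intro i _ i' _ hne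
        refine Finset.disjoint_left.2 fun v hv hv' => hne ?_
        exact (h2 i v (Finset.mem_filter.1 hv).2).symm.trans (h2 i' v (Finset.mem_filter.1 hv').2)
    have hge : ∑ _i : Grp p e, (k + 2) ≤ ∑ i, (Finset.univ.filter fun v => x i v ≠ 0).card :=
      Finset.sum_le_sum fun i _ => hcon i
    rw [Finset.sum_const, Finset.card_univ, Fintype.card_fun, ZMod.card, Fintype.card_fin,
      smul_eq_mul] at hge
    omega
  refine ⟨c, x, h1, h2, fun i => ?_, fun j i i' => h3 j.succ i i'⟩
  have h4 : esymm (k + 2) (x i) = esymm (k + 2) (x i0) := h3 0 i i0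
  rw [(esymm_eq_zero_iff _ (h1 i0).1).2 hi0, esymm_eq_zero_iff _ (h1 i).1] at h4
  omega

/-- The pigeonhole bound `N + 1 < r (k + 2)`: the supports of `r` disjoint faces cannot all have
`k + 2` or more elements. -/
lemma count_bound (r d k : ℕ) (hr : 1 ≤ r) (hk : k = ⌈(((r : ℚ) - 1) / (r : ℚ)) * d⌉₊) :
    (r - 1) * (d + 2) + 1 < r * (k + 2) := by
  have hr0 : (0 : ℚ) < r := by exact_mod_cast hr
  have h1 : (((r : ℚ) - 1) / (r : ℚ)) * d ≤ k := by
    rw [hk]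
    exact Nat.le_ceil _
  rw [div_mul_eq_mul_div, div_le_iff₀ hr0] at h1
  have h2 : (((r - 1 : ℕ)) : ℚ) * d ≤ r * k := by
    rw [Nat.cast_sub hr]
    push_cast
    linarith
  have h3 : (r - 1) * d ≤ r * k := by exact_mod_cast h2
  rw [mul_add, mul_add]
  omega

end VKF

/-- The topological generalized Van Kampen–Flores theorem. -/
theorem topological_generalized_vanKampenFlores
    (d p ee : ℕ) (hp : p.Prime) (hd : 1 ≤ d)
    (r N k : ℕ) (hr : r = p ^ ee)
    (hN : N = (r - 1) * (d + 2))
    (hk : k = ⌈(((r : ℚ) - 1) / (r : ℚ)) * d⌉₊)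
    (f : EuclideanSpace ℝ (Fin (N + 1)) → EuclideanSpace ℝ (Fin d))
    (hf : ContinuousOn f (stdSimp N)) :
    ∃ σ : Fin r → Finset (Fin (N + 1)),
      (∀ j, (σ j).Nonempty) ∧
      (∀ j j', j ≠ j' → Disjoint (σ j) (σ j')) ∧
      (∀ j, (σ j).card ≤ k + 1) ∧
      (⋂ j, f '' simpFace N (σ j)).Nonempty := by
  have : Fact p.Prime := ⟨hp⟩
  have hr1 : 1 ≤ r := by
    rw [hr]
    exact Nat.one_le_pow _ _ hp.pos
  have hbound : N + 1 < p ^ ee * (k + 2) := by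
    rw [hN, ← hr]
    exact VKF.count_bound r d k hr1 hk
  -- `stdSimp` lives in Euclidean space, Mathlib's `stdSimplex` in the plain function space.
  have hmem : ∀ x ∈ stdSimplex ℝ (Fin (N + 1)), WithLp.toLp 2 x ∈ stdSimp N := fun x hx => hx
  obtain ⟨c, x, h1, h2, h3, h4⟩ := VKF.vkf p ee d N k (by rw [hN, hr]) hbound
    (fun j x => f (WithLp.toLp 2 x) j)
    (by
      intro j
      have hc : ContinuousOn (fun x : Fin (N + 1) → ℝ => f (WithLp.toLp 2 x))
          (stdSimplex ℝ (Fin (N + 1))) :=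
        hf.comp (PiLp.continuous_toLp 2 _).continuousOn hmem
      exact (EuclideanSpace.proj (𝕜 := ℝ) j).continuous.comp_continuousOn hc)
  have hcard : Fintype.card (VKF.Grp p ee) = Fintype.card (Fin r) := by
    rw [Fintype.card_fun, ZMod.card, Fintype.card_fin, Fintype.card_fin, hr]
  let E : Fin r ≃ VKF.Grp p ee := (Fintype.equivOfCardEq hcard).symm
  refine ⟨fun j => Finset.univ.filter fun v => x (E j) v ≠ 0, ?_, ?_, fun j => h3 (E j), ?_⟩
  · intro j
    by_contra hemp
    rw [Finset.not_nonempty_iff_eq_empty, Finset.filter_eq_empty_iff] at hemp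
    have hsum := (h1 (E j)).2
    rw [Finset.sum_eq_zero fun v hv => not_not.1 (hemp hv)] at hsum
    exact zero_ne_one hsum
  · intro j j' hne
    refine Finset.disjoint_left.2 fun v hv hv' => hne (E.injective ?_)
    exact (h2 _ v (Finset.mem_filter.1 hv).2).symm.trans (h2 _ v (Finset.mem_filter.1 hv').2)
  · refine ⟨f (WithLp.toLp 2 (x 0)), Set.mem_iInter.2 fun j => ⟨WithLp.toLp 2 (x (E j)), ?_, ?_⟩⟩
    · exact ⟨hmem _ (h1 _), fun v hv => Finset.mem_filter.2 ⟨Finset.mem_univ v, hv⟩⟩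
    · ext i
      exact h4 i (E j) 0
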